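/- arXiv:1111.6782 — 2 statements merged into one kernel-verified Lean document; each statement's English description precedes it below -/
import Mathlib

section
/- Let α ∈ (2,3), n ≥ 2, let γ ∈ H^{(1+α)/2,2}(ℝ/ℤ,ℝⁿ) be injective and parametrized by arc-length, and let h ∈ H^{(1+α)/2,2}(ℝ/ℤ,ℝⁿ). Then the double integral defining R(γ,h) converges absolutely (no principal value is needed), the principal value defining Q(γ,h) exists, and δE^α(γ;h) = α·Q(γ,h) + R(γ,h). -/
open MeasureTheory Filter Set
open scoped RealInnerProductSpace ENNReal Topology

noncomputable section

/-- `ℝⁿ` -/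
abbrev Rn (n : ℕ) := EuclideanSpace ℝ (Fin n)

variable {n : ℕ}

/-- A 1-periodic curve is injective as a map on `ℝ/ℤ`. -/
def PerInjective (γ : ℝ → Rn n) : Prop :=
  ∀ u v : ℝ, γ u = γ v → ∃ k : ℤ, v = u + k

/-- `γ` is a regular curve: `γ'(u) ≠ 0` for all `u`. -/
def RegularCurve (γ : ℝ → Rn n) : Prop := ∀ u : ℝ, deriv γ u ≠ 0

/-- `γ` is parametrized by arc-length: `|γ'(u)| = 1` for all `u`. -/
def ArcLengthParam (γ : ℝ → Rn n) : Prop := ∀ u : ℝ, ‖deriv γ u‖ = 1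

/-- The length `L(γ) = ∫₀¹ |γ'(θ)| dθ` of the closed curve `γ`. -/
def curveLen (γ : ℝ → Rn n) : ℝ := ∫ θ in (0:ℝ)..1, ‖deriv γ θ‖

/-- The arc length `L(γ|_{[u,u+w]}) = |∫_u^{u+w} |γ'(θ)| dθ|`. -/
def arcLen (γ : ℝ → Rn n) (u w : ℝ) : ℝ := |∫ θ in u..(u + w), ‖deriv γ θ‖|

/-- The intrinsic distance `d_γ(u+w,u)`. -/
def idist (γ : ℝ → Rn n) (u w : ℝ) : ℝ :=
  min (arcLen γ u w) (curveLen γ - arcLen γ u w)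

/-- The integrand of the O'Hara energy `E^α`. -/
def ohIntegrand (α : ℝ) (γ : ℝ → Rn n) (u w : ℝ) : ℝ :=
  (1 / ‖γ (u + w) - γ u‖ ^ α - 1 / idist γ u w ^ α) * ‖deriv γ (u + w)‖ * ‖deriv γ u‖

/-- The O'Hara energy `E^α`, with values in `[0,∞]`. -/
def oharaE (α : ℝ) (γ : ℝ → Rn n) : ℝ≥0∞ :=
  ∫⁻ u in Ioc (0:ℝ) 1, ∫⁻ w in Ioo (-(1:ℝ)/2) (1/2), ENNReal.ofReal (ohIntegrand α γ u w)

/-- The O'Hara energy `E^α` as a real number. -/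
def oharaER (α : ℝ) (γ : ℝ → Rn n) : ℝ := (oharaE α γ).toReal

/-- `[−1/2,−ε] ∪ [ε,1/2]`, the `w`-section of `U_ε`. -/
def Wset (ε : ℝ) : Set ℝ := Icc (-(1:ℝ)/2) (-ε) ∪ Icc ε (1/2)

/-- The truncated O'Hara energy `E^α_ε`, an integral over `U_ε`. -/
def oharaEeps (α ε : ℝ) (γ : ℝ → Rn n) : ℝ :=
  ∫ u in Ioc (0:ℝ) 1, ∫ w in Wset ε, ohIntegrand α γ u w

/-- `F` has directional (Gâteaux) derivative `d` at `γ` in direction `h`. -/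
def HasDirDeriv (F : (ℝ → Rn n) → ℝ) (γ h : ℝ → Rn n) (d : ℝ) : Prop :=
  Tendsto (fun τ : ℝ => (F (γ + τ • h) - F γ) / τ) (𝓝[≠] (0:ℝ)) (𝓝 d)

/-- Squared Gagliardo seminorm `[f]²_{H^{s,2}}` of a 1-periodic map. -/
def gagliardoSq (s : ℝ) {E : Type*} [NormedAddCommGroup E] (f : ℝ → E) : ℝ≥0∞ :=
  ∫⁻ u in Ioc (0:ℝ) 1, ∫⁻ w in Ioo (-(1:ℝ)/2) (1/2),
    ENNReal.ofReal (‖f (u + w) - f u‖ ^ 2 / |w| ^ (1 + 2 * s))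

/-- Membership in the fractional Sobolev space `H^{1+σ,2}(ℝ/ℤ,ℝⁿ)`, `σ ∈ (0,1)`:
a 1-periodic `C¹` function whose derivative has finite Gagliardo seminorm of order `σ`. -/
def MemH1 (σ : ℝ) (γ : ℝ → Rn n) : Prop :=
  Function.Periodic γ 1 ∧ ContDiff ℝ 1 γ ∧ gagliardoSq σ (deriv γ) < ⊤

/-- The norm of `H^{1+σ,2}(ℝ/ℤ,ℝⁿ)`. -/
def H1Norm (σ : ℝ) (γ : ℝ → Rn n) : ℝ :=
  Real.sqrt (∫ u in Ioc (0:ℝ) 1, (‖γ u‖ ^ 2 + ‖deriv γ u‖ ^ 2)) +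
    Real.sqrt ((gagliardoSq σ (deriv γ)).toReal)

/-- Membership of a 1-periodic map in `L²(ℝ/ℤ)`. -/
def MemL2per {E : Type*} [NormedAddCommGroup E] (f : ℝ → E) : Prop :=
  Function.Periodic f 1 ∧ AEStronglyMeasurable f (volume : Measure ℝ) ∧
    IntegrableOn (fun u => ‖f u‖ ^ 2) (Ioc (0:ℝ) 1) volume

/-- Membership in the fractional Sobolev space `H^{s,2}(ℝ/ℤ)`, `s ∈ (0,1)`. -/
def MemHs0 (s : ℝ) {E : Type*} [NormedAddCommGroup E] (f : ℝ → E) : Prop :=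
  MemL2per f ∧ gagliardoSq s f < ⊤

/-- The norm of `H^{s,2}(ℝ/ℤ)` for `s ∈ (0,1)`: `‖f‖_{L²} + [f]_{H^{s,2}}`. -/
def Hs0Norm (s : ℝ) {E : Type*} [NormedAddCommGroup E] (f : ℝ → E) : ℝ :=
  Real.sqrt (∫ u in Ioc (0:ℝ) 1, ‖f u‖ ^ 2) + Real.sqrt ((gagliardoSq s f).toReal)

/-- The `k`-th Fourier coefficient (`j`-th component) of a 1-periodic curve. -/
def fCoef (γ : ℝ → Rn n) (k : ℤ) (j : Fin n) : ℂ :=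
  ∫ u in (0:ℝ)..1, (γ u j : ℂ) * Complex.exp ((-2) * (Real.pi : ℂ) * Complex.I * (k : ℂ) * (u : ℂ))

/-- Membership in `H^{s,2}(ℝ/ℤ,ℝⁿ)` via the Fourier characterization:
`((1+|k|²)^{s/2} γ̂(k))_k ∈ ℓ²`. -/
def MemHF (s : ℝ) (γ : ℝ → Rn n) : Prop :=
  Function.Periodic γ 1 ∧ Continuous γ ∧
    Summable (fun k : ℤ => (1 + (k : ℝ) ^ 2) ^ s * ∑ j, ‖fCoef γ k j‖ ^ 2)

/-- The squared Fourier norm of `H^{s,2}(ℝ/ℤ,ℝⁿ)`. -/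
def fNormSq (s : ℝ) (γ : ℝ → Rn n) : ℝ :=
  ∑' k : ℤ, (1 + (k : ℝ) ^ 2) ^ s * ∑ j, ‖fCoef γ k j‖ ^ 2

/-- C¹-norm of a 1-periodic map. -/
def c1Norm (f : ℝ → Rn n) : ℝ := ⨆ u : Icc (0:ℝ) 1, (‖f u.1‖ + ‖deriv f u.1‖)

/-- The integrand of `Q(γ,h)`. -/
def Qintegrand (α : ℝ) (γ h : ℝ → Rn n) (u w : ℝ) : ℝ :=
  ⟪deriv γ u, deriv h u⟫ / |w| ^ α
    - ⟪γ (u + w) - γ u, h (u + w) - h u⟫ / |w| ^ (α + 2)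

/-- The integrand of `R(γ,h)`. -/
def Rintegrand (α : ℝ) (γ h : ℝ → Rn n) (u w : ℝ) : ℝ :=
  2 * ⟪deriv γ u, deriv h u⟫ * (1 / ‖γ (u + w) - γ u‖ ^ α - 1 / |w| ^ α)
    - α * ⟪γ (u + w) - γ u, h (u + w) - h u⟫ *
        (1 / ‖γ (u + w) - γ u‖ ^ (α + 2) - 1 / |w| ^ (α + 2))

/-- `R(γ,h)`, an absolutely convergent double integral over `(ℝ/ℤ) × [−1/2,1/2]`. -/
def Rval (α : ℝ) (γ h : ℝ → Rn n) : ℝ :=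
  ∫ p in (Ioc (0:ℝ) 1) ×ˢ (Icc (-(1:ℝ)/2) (1/2)), Rintegrand α γ h p.1 p.2

/-- Averages over `[0,1]` are multiplicative up to the square of the oscillation. -/
theorem norm_integral_bilin_sub_le {F G H : Type*} [NormedAddCommGroup F] [NormedSpace ℝ F]
    [CompleteSpace F] [NormedAddCommGroup G] [NormedSpace ℝ G] [CompleteSpace G]
    [NormedAddCommGroup H] [NormedSpace ℝ H] [CompleteSpace H] (B : F →L[ℝ] G →L[ℝ] H)
    (hB : ∀ x y, ‖B x y‖ ≤ ‖x‖ * ‖y‖) {f : ℝ → F} {g : ℝ → G} (hf : Continuous f)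
    (hg : Continuous g) (f₀ : F) (g₀ : G) :
    ‖(∫ θ in (0:ℝ)..1, B (f θ) (g θ)) - B (∫ θ in (0:ℝ)..1, f θ) (∫ θ in (0:ℝ)..1, g θ)‖ ≤
      ∫ θ in (0:ℝ)..1, (‖f θ - f₀‖ ^ 2 + ‖g θ - g₀‖ ^ 2) := by
  have hBc : Continuous fun p : F × G => B p.1 p.2 := B.continuous₂
  have hf' : Continuous fun θ => f θ - f₀ := by fun_prop
  have hg' : Continuous fun θ => g θ - g₀ := by fun_prop
  have e1 : ∫ θ in (0:ℝ)..1, (f θ - f₀) = (∫ θ in (0:ℝ)..1, f θ) - f₀ := by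
    rw [intervalIntegral.integral_sub (hf.intervalIntegrable _ _) (by simp)]; simp
  have e2 : ∫ θ in (0:ℝ)..1, (g θ - g₀) = (∫ θ in (0:ℝ)..1, g θ) - g₀ := by
    rw [intervalIntegral.integral_sub (hg.intervalIntegrable _ _) (by simp)]; simp
  have c1 : Continuous fun θ => B (f θ) (g θ) := hBc.comp (hf.prodMk hg)
  have c2 : Continuous fun θ => B f₀ (g θ) := hBc.comp (continuous_const.prodMk hg)
  have c3 : Continuous fun θ => B (f θ) g₀ := hBc.comp (hf.prodMk continuous_const)
  have c4 : Continuous fun θ => B (f θ - f₀) (g θ - g₀) := hBc.comp (hf'.prodMk hg')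
  have e3 : ∫ θ in (0:ℝ)..1, B (f θ - f₀) (g θ - g₀) = (∫ θ in (0:ℝ)..1, B (f θ) (g θ))
      - B f₀ (∫ θ in (0:ℝ)..1, g θ) - (B (∫ θ in (0:ℝ)..1, f θ) g₀ - B f₀ g₀) := by
    have : ∀ θ, B (f θ - f₀) (g θ - g₀) = B (f θ) (g θ) - B f₀ (g θ) - (B (f θ) g₀ - B f₀ g₀) := by
      intro θ; simp only [map_sub, _root_.sub_apply]
    simp_rw [this]
    rw [intervalIntegral.integral_sub (Continuous.intervalIntegrable (by fun_prop) _ _)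
      (Continuous.intervalIntegrable (by fun_prop) _ _),
      intervalIntegral.integral_sub (c1.intervalIntegrable _ _) (c2.intervalIntegrable _ _),
      intervalIntegral.integral_sub (c3.intervalIntegrable _ _) (by simp)]
    rw [ContinuousLinearMap.intervalIntegral_comp_comm _ (hg.intervalIntegrable _ _)]
    have := ContinuousLinearMap.intervalIntegral_comp_comm (B.flip g₀)
      (hf.intervalIntegrable (μ := volume) 0 1)
    simp only [ContinuousLinearMap.flip_apply] at this
    rw [this]; simp
  have key : (∫ θ in (0:ℝ)..1, B (f θ) (g θ))
      - B (∫ θ in (0:ℝ)..1, f θ) (∫ θ in (0:ℝ)..1, g θ)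
      = (∫ θ in (0:ℝ)..1, B (f θ - f₀) (g θ - g₀))
        - B (∫ θ in (0:ℝ)..1, (f θ - f₀)) (∫ θ in (0:ℝ)..1, (g θ - g₀)) := by
    rw [e3, e1, e2]; simp only [map_sub, _root_.sub_apply]; abel
  have jensen : ∀ k : ℝ → ℝ, Continuous k →
      (∫ θ in (0:ℝ)..1, k θ) ^ 2 ≤ ∫ θ in (0:ℝ)..1, k θ ^ 2 := by
    intro k hk
    set m := ∫ θ in (0:ℝ)..1, k θ with hm
    have : 0 ≤ ∫ θ in (0:ℝ)..1, (k θ - m) ^ 2 :=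
      intervalIntegral.integral_nonneg zero_le_one fun _ _ => sq_nonneg _
    have e : ∫ θ in (0:ℝ)..1, (k θ - m) ^ 2 = (∫ θ in (0:ℝ)..1, k θ ^ 2) - 2 * m * m + m ^ 2 := by
      have : ∀ θ, (k θ - m) ^ 2 = (k θ ^ 2 - (2 * m) * k θ) + m ^ 2 := fun θ => by ring
      simp_rw [this]
      rw [intervalIntegral.integral_add
        (Continuous.intervalIntegrable (by fun_prop) _ _) (by simp),
        intervalIntegral.integral_sub (Continuous.intervalIntegrable (by fun_prop) _ _)
        (Continuous.intervalIntegrable (by fun_prop) _ _), intervalIntegral.integral_const_mul]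
      simp [hm]
    nlinarith
  have cf : Continuous fun θ => ‖f θ - f₀‖ := by fun_prop
  have cg : Continuous fun θ => ‖g θ - g₀‖ := by fun_prop
  have b1 : ‖∫ θ in (0:ℝ)..1, B (f θ - f₀) (g θ - g₀)‖ ≤
      ∫ θ in (0:ℝ)..1, (1/2) * (‖f θ - f₀‖ ^ 2 + ‖g θ - g₀‖ ^ 2) := by
    refine (intervalIntegral.norm_integral_le_integral_norm zero_le_one).trans
      (intervalIntegral.integral_mono_on zero_le_one (c4.norm.intervalIntegrable _ _)
      (Continuous.intervalIntegrable (by fun_prop) _ _) fun θ _ => ?_)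
    nlinarith [hB (f θ - f₀) (g θ - g₀), sq_nonneg (‖f θ - f₀‖ - ‖g θ - g₀‖)]
  have b2 : ‖B (∫ θ in (0:ℝ)..1, (f θ - f₀)) (∫ θ in (0:ℝ)..1, (g θ - g₀))‖ ≤
      (1/2) * ∫ θ in (0:ℝ)..1, (‖f θ - f₀‖ ^ 2 + ‖g θ - g₀‖ ^ 2) := by
    rw [intervalIntegral.integral_add (Continuous.intervalIntegrable (by fun_prop) _ _)
      (Continuous.intervalIntegrable (by fun_prop) _ _)]
    have i1 := intervalIntegral.norm_integral_le_integral_norm (μ := volume)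
      (f := fun θ => f θ - f₀) (zero_le_one (α := ℝ))
    have i2 := intervalIntegral.norm_integral_le_integral_norm (μ := volume)
      (f := fun θ => g θ - g₀) (zero_le_one (α := ℝ))
    have j1 := jensen _ cf
    have j2 := jensen _ cg
    have := hB (∫ θ in (0:ℝ)..1, (f θ - f₀)) (∫ θ in (0:ℝ)..1, (g θ - g₀))
    have n1 := norm_nonneg (∫ θ in (0:ℝ)..1, (f θ - f₀))
    have n2 := norm_nonneg (∫ θ in (0:ℝ)..1, (g θ - g₀))
    have s1 := pow_le_pow_left₀ n1 i1 2
    have s2 := pow_le_pow_left₀ n2 i2 2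
    nlinarith [sq_nonneg (‖∫ θ in (0:ℝ)..1, (f θ - f₀)‖ - ‖∫ θ in (0:ℝ)..1, (g θ - g₀)‖)]
  rw [intervalIntegral.integral_const_mul] at b1
  rw [key]
  linarith [norm_sub_le (∫ θ in (0:ℝ)..1, B (f θ - f₀) (g θ - g₀))
    (B (∫ θ in (0:ℝ)..1, (f θ - f₀)) (∫ θ in (0:ℝ)..1, (g θ - g₀)))]

theorem rpow_neg_lipschitz {s m a b : ℝ} (hs : 0 < s) (hm : 0 < m) (ha : m ≤ a) (hb : m ≤ b) :
    |a ^ (-s) - b ^ (-s)| ≤ s * m ^ (-s - 1) * |a - b| := by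
  have := Convex.norm_image_sub_le_of_norm_hasDerivWithin_le (𝕜 := ℝ) (f := fun t : ℝ => t ^ (-s))
    (f' := fun t => -s * t ^ (-s - 1)) (s := Ici m) (x := b) (y := a) (C := s * m ^ (-s - 1))
    (fun t ht => (Real.hasDerivAt_rpow_const (Or.inl (hm.trans_le ht).ne')).hasDerivWithinAt)
    (fun t ht => ?_) (convex_Ici m) hb ha
  · simpa using this
  · have ht' : 0 < t := hm.trans_le ht
    rw [norm_mul, norm_neg, Real.norm_of_nonneg hs.le,
      Real.norm_of_nonneg (Real.rpow_nonneg ht'.le _)]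
    exact mul_le_mul_of_nonneg_left
      (Real.rpow_le_rpow_of_nonpos hm ht (by linarith)) hs.le

section Perturbation

variable {E : Type*} [NormedAddCommGroup E] [InnerProductSpace ℝ E]

theorem norm_add_smul_mem_Icc {x y : E} {τ M : ℝ} (hx : ‖x‖ = 1) (hy : ‖y‖ ≤ M)
    (hτ : |τ| * M ≤ 1 / 2) : 1 / 2 ≤ ‖x + τ • y‖ ∧ ‖x + τ • y‖ ≤ 3 / 2 := by
  have h1 : ‖τ • y‖ ≤ 1 / 2 := by
    rw [norm_smul, Real.norm_eq_abs]
    exact (mul_le_mul_of_nonneg_left hy (abs_nonneg _)).trans hτ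
  constructor
  · have := norm_sub_norm_le x (-(τ • y))
    rw [sub_neg_eq_add, norm_neg] at this
    linarith
  · linarith [norm_add_le x (τ • y)]

/-- The unit tangent vector. -/
def unitVec (X : E) : E := ‖X‖⁻¹ • X

theorem norm_unitVec {X : E} (hX : X ≠ 0) : ‖unitVec X‖ = 1 := by
  simp [unitVec, norm_smul, hX]

theorem norm_smul_unitVec {X : E} (hX : X ≠ 0) : ‖X‖ • unitVec X = X := by
  simp [unitVec, smul_smul, hX]

theorem norm_unitVec_sub_le {X Y : E} (hX : 1 / 2 ≤ ‖X‖) (hY : Y ≠ 0) :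
    ‖unitVec X - unitVec Y‖ ≤ 4 * ‖X - Y‖ := by
  have hX0 : X ≠ 0 := norm_pos_iff.1 (by linarith)
  have h1 : ‖X‖ • (unitVec X - unitVec Y) = (X - Y) - (‖X‖ - ‖Y‖) • unitVec Y := by
    rw [smul_sub, norm_smul_unitVec hX0, sub_smul, norm_smul_unitVec hY]; abel
  have h2 : ‖X‖ * ‖unitVec X - unitVec Y‖ ≤ 2 * ‖X - Y‖ := by
    calc ‖X‖ * ‖unitVec X - unitVec Y‖ = ‖(X - Y) - (‖X‖ - ‖Y‖) • unitVec Y‖ := by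
          rw [← h1, norm_smul, norm_norm]
      _ ≤ ‖X - Y‖ + |‖X‖ - ‖Y‖| * 1 := by
          refine (norm_sub_le _ _).trans ?_
          rw [norm_smul, norm_unitVec hY, Real.norm_eq_abs]
      _ ≤ 2 * ‖X - Y‖ := by linarith [abs_norm_sub_norm_le X Y]
  nlinarith [norm_nonneg (unitVec X - unitVec Y)]

theorem hasDerivAt_norm_add_smul (x y : E) {τ : ℝ} (hX : x + τ • y ≠ 0) :
    HasDerivAt (fun t : ℝ => ‖x + t • y‖) ⟪unitVec (x + τ • y), y⟫ τ := by
  have h1 : HasDerivAt (fun t : ℝ => x + t • y) y τ := by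
    simpa using ((hasDerivAt_id τ).smul_const y).const_add x
  have h2 := h1.norm_sq.sqrt (by simpa using hX)
  simp only [Real.sqrt_sq (norm_nonneg _)] at h2
  convert h2 using 1
  rw [unitVec, real_inner_smul_left]
  field_simp

theorem norm_sub_sq_of_perturb {x y x₀ y₀ : E} {τ : ℝ} (hτ : |τ| ≤ 1) :
    ‖(x + τ • y) - (x₀ + τ • y₀)‖ ^ 2 ≤ 2 * (‖x - x₀‖ ^ 2 + ‖y - y₀‖ ^ 2) := by
  have h : ‖(x + τ • y) - (x₀ + τ • y₀)‖ ≤ ‖x - x₀‖ + ‖y - y₀‖ := by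
    have : (x + τ • y) - (x₀ + τ • y₀) = (x - x₀) + τ • (y - y₀) := by rw [smul_sub]; abel
    rw [this]
    refine (norm_add_le _ _).trans (add_le_add_right ?_ _)
    rw [norm_smul, Real.norm_eq_abs]
    nlinarith [norm_nonneg (y - y₀)]
  have := pow_le_pow_left₀ (norm_nonneg _) h 2
  nlinarith [sq_nonneg (‖x - x₀‖ - ‖y - y₀‖)]

end Perturbation

section PathAverages

variable {E : Type*} [NormedAddCommGroup E] [InnerProductSpace ℝ E]

/-- Mean square oscillation of the pair of paths `(x, y)` about its initial value. -/
def meanSqOsc (x y : ℝ → E) : ℝ := ∫ θ in (0:ℝ)..1, (‖x θ - x 0‖ ^ 2 + ‖y θ - y 0‖ ^ 2)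

/-- The mean of the speed `‖x + τ y‖`. -/
def meanSpeed (x y : ℝ → E) (τ : ℝ) : ℝ := ∫ θ in (0:ℝ)..1, ‖x θ + τ • y θ‖

/-- The derivative of `meanSpeed` in `τ`. -/
def meanSpeedDeriv (x y : ℝ → E) (τ : ℝ) : ℝ :=
  ∫ θ in (0:ℝ)..1, ⟪unitVec (x θ + τ • y θ), y θ⟫

/-- The norm of the mean of `x + τ y`. -/
def normMean (x y : ℝ → E) (τ : ℝ) : ℝ :=
  ‖(∫ θ in (0:ℝ)..1, x θ) + τ • ∫ θ in (0:ℝ)..1, y θ‖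

/-- Rescaled integrand of the energy with the intrinsic distance replaced by the arc length. -/
def energyDensity (s : ℝ) (x y : ℝ → E) (τ : ℝ) : ℝ :=
  ‖x 1 + τ • y 1‖ * ‖x 0 + τ • y 0‖ * (normMean x y τ ^ (-s) - meanSpeed x y τ ^ (-s))

/-- The derivative of `energyDensity` in `τ`. -/
def energyDensityDeriv (s : ℝ) (x y : ℝ → E) (τ : ℝ) : ℝ :=
  (⟪unitVec (x 1 + τ • y 1), y 1⟫ * ‖x 0 + τ • y 0‖ +
      ‖x 1 + τ • y 1‖ * ⟪unitVec (x 0 + τ • y 0), y 0⟫) *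
      (normMean x y τ ^ (-s) - meanSpeed x y τ ^ (-s)) -
    s * (‖x 1 + τ • y 1‖ * ‖x 0 + τ • y 0‖) *
      (normMean x y τ ^ (-s - 2) *
        ⟪(∫ θ in (0:ℝ)..1, x θ) + τ • ∫ θ in (0:ℝ)..1, y θ, ∫ θ in (0:ℝ)..1, y θ⟫ -
      meanSpeed x y τ ^ (-s - 2) * (meanSpeed x y τ * meanSpeedDeriv x y τ))

variable {x y : ℝ → E} {τ M : ℝ}

omit [InnerProductSpace ℝ E] in
theorem meanSqOsc_nonneg (x y : ℝ → E) : 0 ≤ meanSqOsc x y :=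
  intervalIntegral.integral_nonneg zero_le_one fun _ _ => by positivity

omit [InnerProductSpace ℝ E] in
theorem integral_le_mul_meanSqOsc (hx : Continuous x) (hy : Continuous y) {f : ℝ → ℝ}
    (hf : Continuous f) {C : ℝ} (h : ∀ θ, f θ ≤ C * (‖x θ - x 0‖ ^ 2 + ‖y θ - y 0‖ ^ 2)) :
    ∫ θ in (0:ℝ)..1, f θ ≤ C * meanSqOsc x y := by
  rw [meanSqOsc, ← intervalIntegral.integral_const_mul]
  exact intervalIntegral.integral_mono_on zero_le_one (hf.intervalIntegrable _ _)
    (Continuous.intervalIntegrable (by fun_prop) _ _) fun θ _ => h θ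

theorem continuous_unitVec {X : ℝ → E} (hX : Continuous X) (h : ∀ θ, X θ ≠ 0) :
    Continuous fun θ => unitVec (X θ) :=
  (hX.norm.inv₀ fun θ => norm_ne_zero_iff.2 (h θ)).smul hX

variable (hxc : Continuous x) (hyc : Continuous y) (hx : ∀ θ, ‖x θ‖ = 1) (hy : ∀ θ, ‖y θ‖ ≤ M)
  (hM : |τ| * M ≤ 1 / 2)

include hx hy hM in
theorem perturb_ne_zero (θ : ℝ) : x θ + τ • y θ ≠ 0 :=
  norm_pos_iff.1 (by linarith [(norm_add_smul_mem_Icc (hx θ) (hy θ) hM).1])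

include hxc hyc hx hy hM in
theorem meanSpeed_mem_Icc : 1 / 2 ≤ meanSpeed x y τ ∧ meanSpeed x y τ ≤ 3 / 2 := by
  have c : Continuous fun θ => ‖x θ + τ • y θ‖ := by fun_prop
  have h1 := intervalIntegral.integral_mono_on (a := 0) (b := 1) (f := fun _ => (1 / 2 : ℝ))
    (g := fun θ => ‖x θ + τ • y θ‖) (μ := volume) zero_le_one (by simp)
    (c.intervalIntegrable _ _) fun θ _ => (norm_add_smul_mem_Icc (hx θ) (hy θ) hM).1
  have h2 := intervalIntegral.integral_mono_on (a := 0) (b := 1) (g := fun _ => (3 / 2 : ℝ))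
    (f := fun θ => ‖x θ + τ • y θ‖) (μ := volume) zero_le_one
    (c.intervalIntegrable _ _) (by simp) fun θ _ => (norm_add_smul_mem_Icc (hx θ) (hy θ) hM).2
  simp only [intervalIntegral.integral_const, sub_zero, one_smul] at h1 h2
  exact ⟨h1, h2⟩

include hxc hyc in
theorem integral_perturb : ∫ θ in (0:ℝ)..1, (x θ + τ • y θ) =
    (∫ θ in (0:ℝ)..1, x θ) + τ • ∫ θ in (0:ℝ)..1, y θ := by
  rw [intervalIntegral.integral_add (hxc.intervalIntegrable _ _)
    (Continuous.intervalIntegrable (by fun_prop) _ _), intervalIntegral.integral_smul]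

include hxc hyc in
theorem normMean_le_meanSpeed : normMean x y τ ≤ meanSpeed x y τ := by
  rw [normMean, ← integral_perturb hxc hyc]
  exact intervalIntegral.norm_integral_le_integral_norm zero_le_one

include hx hy hM in
theorem norm_unitVec_perturb_sub_sq_le (hτ : |τ| ≤ 1) (θ : ℝ) :
    ‖unitVec (x θ + τ • y θ) - unitVec (x 0 + τ • y 0)‖ ^ 2 ≤
      32 * (‖x θ - x 0‖ ^ 2 + ‖y θ - y 0‖ ^ 2) := by
  have h1 := norm_unitVec_sub_le (norm_add_smul_mem_Icc (hx θ) (hy θ) hM).1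
    (perturb_ne_zero hx hy hM 0)
  have h2 := pow_le_pow_left₀ (norm_nonneg _) h1 2
  have h3 := norm_sub_sq_of_perturb (x := x θ) (y := y θ) (x₀ := x 0) (y₀ := y 0) hτ
  nlinarith

variable [CompleteSpace E]

include hxc hyc hx hy hM in
theorem meanSpeed_sub_normMean_le (hτ : |τ| ≤ 1) :
    meanSpeed x y τ - normMean x y τ ≤ 24 * meanSqOsc x y := by
  set T₀ := unitVec (x 0 + τ • y 0) with hT₀
  have hT₀n : ‖T₀‖ = 1 := norm_unitVec (perturb_ne_zero hx hy hM 0)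
  have h1 : ⟪T₀, ∫ θ in (0:ℝ)..1, (x θ + τ • y θ)⟫ ≤ normMean x y τ := by
    rw [normMean, ← integral_perturb hxc hyc]
    simpa [hT₀n] using real_inner_le_norm T₀ (∫ θ in (0:ℝ)..1, (x θ + τ • y θ))
  have h2 : ⟪T₀, ∫ θ in (0:ℝ)..1, (x θ + τ • y θ)⟫ =
      ∫ θ in (0:ℝ)..1, ⟪T₀, x θ + τ • y θ⟫ :=
    (ContinuousLinearMap.intervalIntegral_comp_comm (innerSL ℝ T₀)
      (Continuous.intervalIntegrable (by fun_prop) _ _)).symm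
  have h3 : meanSpeed x y τ - ∫ θ in (0:ℝ)..1, ⟪T₀, x θ + τ • y θ⟫ =
      ∫ θ in (0:ℝ)..1, (‖x θ + τ • y θ‖ - ⟪T₀, x θ + τ • y θ⟫) := by
    rw [meanSpeed, intervalIntegral.integral_sub (Continuous.intervalIntegrable (by fun_prop) _ _)
      (Continuous.intervalIntegrable (by fun_prop) _ _)]
  have h4 : ∫ θ in (0:ℝ)..1, (‖x θ + τ • y θ‖ - ⟪T₀, x θ + τ • y θ⟫) ≤ 24 * meanSqOsc x y := by
    refine integral_le_mul_meanSqOsc hxc hyc (by fun_prop) fun θ => ?_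
    have hne := perturb_ne_zero hx hy hM θ
    have hT := norm_unitVec hne
    have e : ‖x θ + τ • y θ‖ - ⟪T₀, x θ + τ • y θ⟫ =
        ‖x θ + τ • y θ‖ * (‖unitVec (x θ + τ • y θ) - T₀‖ ^ 2 / 2) := by
      conv_lhs => rw [← norm_smul_unitVec hne]
      rw [norm_sub_sq_real, hT, hT₀n, real_inner_smul_right, norm_smul, norm_norm, hT,
        real_inner_comm T₀]
      ring
    rw [e]
    have := norm_unitVec_perturb_sub_sq_le hx hy hM hτ θ
    have h32 := (norm_add_smul_mem_Icc (hx θ) (hy θ) hM).2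
    calc _ ≤ 3 / 2 * (32 * (‖x θ - x 0‖ ^ 2 + ‖y θ - y 0‖ ^ 2) / 2) := by gcongr
      _ = _ := by ring
  linarith

include hxc hyc hx hy hM in
theorem abs_meanSpeed_mul_deriv_sub_le (hτ : |τ| ≤ 1) :
    |⟪(∫ θ in (0:ℝ)..1, x θ) + τ • ∫ θ in (0:ℝ)..1, y θ, ∫ θ in (0:ℝ)..1, y θ⟫ -
      meanSpeed x y τ * meanSpeedDeriv x y τ| ≤ (50 + 34 * M) * meanSqOsc x y := by
  have hne := perturb_ne_zero hx hy hM
  have cX : Continuous fun θ => x θ + τ • y θ := by fun_prop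
  have cT := continuous_unitVec cX hne
  have hW := meanSqOsc_nonneg x y
  have hT := norm_unitVec_perturb_sub_sq_le hx hy hM hτ
  have h1 := norm_integral_bilin_sub_le (innerSL ℝ (E := E)) (fun a b =>
    norm_inner_le_norm (𝕜 := ℝ) a b) cT hyc (unitVec (x 0 + τ • y 0)) (y 0)
  have h1' : ∫ θ in (0:ℝ)..1, (‖unitVec (x θ + τ • y θ) - unitVec (x 0 + τ • y 0)‖ ^ 2 +
      ‖y θ - y 0‖ ^ 2) ≤ 33 * meanSqOsc x y :=
    integral_le_mul_meanSqOsc hxc hyc (by fun_prop) fun θ => by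
      nlinarith [hT θ, sq_nonneg ‖x θ - x 0‖]
  have h2 := norm_integral_bilin_sub_le (ContinuousLinearMap.lsmul ℝ ℝ (E := E)) (fun a b => by
    simp [norm_smul]) cX.norm cT ‖x 0 + τ • y 0‖ (unitVec (x 0 + τ • y 0))
  have h2' : ∫ θ in (0:ℝ)..1, (‖‖x θ + τ • y θ‖ - ‖x 0 + τ • y 0‖‖ ^ 2 +
      ‖unitVec (x θ + τ • y θ) - unitVec (x 0 + τ • y 0)‖ ^ 2) ≤ 34 * meanSqOsc x y :=
    integral_le_mul_meanSqOsc hxc hyc (by fun_prop) fun θ => by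
      have a1 := norm_sub_sq_of_perturb (x := x θ) (y := y θ) (x₀ := x 0) (y₀ := y 0) hτ
      have a2 := abs_norm_sub_norm_le (x θ + τ • y θ) (x 0 + τ • y 0)
      have a3 := pow_le_pow_left₀ (abs_nonneg _) a2 2
      rw [Real.norm_eq_abs]
      nlinarith [hT θ]
  replace h1 := h1.trans h1'
  replace h2 := h2.trans h2'
  simp only [ContinuousLinearMap.lsmul_apply, norm_smul_unitVec (hne _)] at h2
  rw [integral_perturb hxc hyc] at h2
  change ‖_ - meanSpeed x y τ • _‖ ≤ _ at h2
  change |meanSpeedDeriv x y τ - ⟪_, _⟫| ≤ _ at h1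
  set V := (∫ θ in (0:ℝ)..1, x θ) + τ • ∫ θ in (0:ℝ)..1, y θ
  set k := ∫ θ in (0:ℝ)..1, y θ with hk
  set T := ∫ θ in (0:ℝ)..1, unitVec (x θ + τ • y θ)
  have hkM : ‖k‖ ≤ M := by
    simpa using intervalIntegral.norm_integral_le_of_norm_le_const (a := 0) (b := 1)
      (fun θ _ => hy θ)
  obtain ⟨a1, a2⟩ := meanSpeed_mem_Icc hxc hyc hx hy hM
  set a := meanSpeed x y τ
  have e : ⟪V, k⟫ - a * meanSpeedDeriv x y τ =
      ⟪V - a • T, k⟫ - a * (meanSpeedDeriv x y τ - ⟪T, k⟫) := by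
    rw [inner_sub_left, real_inner_smul_left]; ring
  rw [e]
  have b1 : |⟪V - a • T, k⟫| ≤ 34 * meanSqOsc x y * M :=
    (abs_real_inner_le_norm _ _).trans (mul_le_mul h2 hkM (norm_nonneg _) (by positivity))
  have b2 : |a * (meanSpeedDeriv x y τ - ⟪T, k⟫)| ≤ 3 / 2 * (33 * meanSqOsc x y) := by
    rw [abs_mul, abs_of_pos (by linarith : 0 < a)]
    exact mul_le_mul a2 h1 (abs_nonneg _) (by norm_num)
  linarith [abs_sub ⟪V - a • T, k⟫ (a * (meanSpeedDeriv x y τ - ⟪T, k⟫))]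

omit [CompleteSpace E] in
include hxc hyc hx hy in
theorem hasDerivAt_meanSpeed (hM' : |τ| * M < 1 / 2) :
    HasDerivAt (meanSpeed x y) (meanSpeedDeriv x y τ) τ := by
  have hs : {t : ℝ | |t| * M < 1 / 2} ∈ 𝓝 τ :=
    (isOpen_lt (by fun_prop) continuous_const).mem_nhds hM'
  have hne : ∀ t : ℝ, |t| * M < 1 / 2 → ∀ θ, x θ + t • y θ ≠ 0 := fun t ht =>
    perturb_ne_zero hx hy ht.le
  refine (intervalIntegral.hasDerivAt_integral_of_dominated_loc_of_deriv_le (μ := volume)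
    (F := fun t θ => ‖x θ + t • y θ‖) (F' := fun t θ => ⟪unitVec (x θ + t • y θ), y θ⟫)
    (bound := fun _ => M) hs (Eventually.of_forall fun t => ?_) ?_ ?_ ?_ (by simp) ?_).2
  · exact Continuous.aestronglyMeasurable (by fun_prop)
  · exact Continuous.intervalIntegrable (by fun_prop) _ _
  · have := continuous_unitVec (X := fun θ => x θ + τ • y θ) (by fun_prop) (hne τ hM')
    exact Continuous.aestronglyMeasurable (by fun_prop)
  · refine Eventually.of_forall fun θ _ t ht => (norm_inner_le_norm (𝕜 := ℝ) _ _).trans ?_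
    rw [norm_unitVec (hne t ht θ), one_mul]
    exact hy θ
  · exact Eventually.of_forall fun θ _ t ht => hasDerivAt_norm_add_smul _ _ (hne t ht θ)

theorem HasDerivAt.rpow_neg_of_mul_deriv {f : ℝ → ℝ} {f' t s c : ℝ} (hf : HasDerivAt f f' t)
    (h0 : 0 < f t) (hc : f t * f' = c) :
    HasDerivAt (fun t => f t ^ (-s)) (-s * (f t ^ (-s - 2) * c)) t := by
  convert hf.rpow_const (p := -s) (Or.inl h0.ne') using 1
  have : f t ^ (-s - 1) = f t ^ (-s - 2) * f t := by
    rw [← Real.rpow_add_one h0.ne']; ring_nf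
  rw [this, ← hc]; ring

omit [CompleteSpace E] in
include hxc hyc hx hy in
theorem hasDerivAt_energyDensity (s : ℝ) (hM' : |τ| * M < 1 / 2) (hb : 0 < normMean x y τ) :
    HasDerivAt (energyDensity s x y) (energyDensityDeriv s x y τ) τ := by
  have hne := perturb_ne_zero hx hy hM'.le
  have ha := meanSpeed_mem_Icc hxc hyc hx hy hM'.le
  have hb' : (∫ θ in (0:ℝ)..1, x θ) + τ • ∫ θ in (0:ℝ)..1, y θ ≠ 0 := norm_pos_iff.1 hb
  have d1 := hasDerivAt_norm_add_smul _ _ (hne 1)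
  have d0 := hasDerivAt_norm_add_smul _ _ (hne 0)
  have da := (hasDerivAt_meanSpeed hxc hyc hx hy hM').rpow_neg_of_mul_deriv (s := s)
    (by linarith) rfl
  have db := (hasDerivAt_norm_add_smul _ _ hb').rpow_neg_of_mul_deriv (s := s) hb
    (c := ⟪(∫ θ in (0:ℝ)..1, x θ) + τ • ∫ θ in (0:ℝ)..1, y θ, ∫ θ in (0:ℝ)..1, y θ⟫) (by
      rw [← real_inner_smul_left, norm_smul_unitVec hb'])
  refine ((d1.mul d0).mul (db.sub da)).congr_deriv ?_
  simp only [energyDensityDeriv, normMean, Pi.mul_apply, Pi.sub_apply]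
  ring

include hxc hyc hx hy hM in
theorem abs_energyDensity_le {s m : ℝ} (hs : 0 < s) (hτ : |τ| ≤ 1) (hm : 0 < m)
    (hb : m ≤ normMean x y τ) :
    |energyDensity s x y τ| ≤ 9 / 4 * (s * m ^ (-s - 1) * 24) * meanSqOsc x y := by
  have hab := normMean_le_meanSpeed (τ := τ) hxc hyc
  have hd := meanSpeed_sub_normMean_le hxc hyc hx hy hM hτ
  have l1 := rpow_neg_lipschitz hs hm hb (hb.trans hab)
  rw [abs_sub_comm (normMean x y τ), abs_of_nonneg (sub_nonneg.2 hab)] at l1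
  have hm1 := Real.rpow_nonneg hm.le (-s - 1)
  obtain ⟨_, u0⟩ := norm_add_smul_mem_Icc (hx 0) (hy 0) hM
  obtain ⟨_, u1⟩ := norm_add_smul_mem_Icc (hx 1) (hy 1) hM
  rw [energyDensity, abs_mul, abs_mul, abs_norm, abs_norm]
  calc _ ≤ (3 / 2 * (3 / 2)) * (s * m ^ (-s - 1) * (24 * meanSqOsc x y)) := by
        gcongr
        exact l1.trans (by gcongr)
    _ = _ := by ring

include hxc hyc hx hy hM in
theorem abs_energyDensityDeriv_le {s m : ℝ} (hs : 0 < s) (hτ : |τ| ≤ 1) (hm : 0 < m)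
    (hb : m ≤ normMean x y τ) :
    |energyDensityDeriv s x y τ| ≤ (3 * M * (s * m ^ (-s - 1) * 24) +
      s * (9 / 4) * ((s + 2) * m ^ (-s - 3) * 24 * (3 / 2 * M) + m ^ (-s - 2) * (50 + 34 * M))) *
        meanSqOsc x y := by
  have hM0 : 0 ≤ M := (norm_nonneg _).trans (hy 0)
  have hW := meanSqOsc_nonneg x y
  have hab := normMean_le_meanSpeed (τ := τ) hxc hyc
  have hd := meanSpeed_sub_normMean_le hxc hyc hx hy hM hτ
  have he := abs_meanSpeed_mul_deriv_sub_le hxc hyc hx hy hM hτ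
  obtain ⟨_, hau⟩ := meanSpeed_mem_Icc hxc hyc hx hy hM
  have l1 := rpow_neg_lipschitz hs hm hb (hb.trans hab)
  have l2 := rpow_neg_lipschitz (s := s + 2) (by linarith) hm hb (hb.trans hab)
  rw [abs_sub_comm (normMean x y τ), abs_of_nonneg (sub_nonneg.2 hab)] at l1 l2
  rw [show -(s + 2) = -s - 2 by ring, show -s - 2 - 1 = -s - 3 by ring] at l2
  have hm1 := Real.rpow_nonneg hm.le (-s - 1)
  have hm2 := Real.rpow_nonneg hm.le (-s - 2)
  have hm3 := Real.rpow_nonneg hm.le (-s - 3)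
  obtain ⟨_, u0⟩ := norm_add_smul_mem_Icc (hx 0) (hy 0) hM
  obtain ⟨_, u1⟩ := norm_add_smul_mem_Icc (hx 1) (hy 1) hM
  have hT : ∀ θ, |⟪unitVec (x θ + τ • y θ), y θ⟫| ≤ M := fun θ => by
    refine (abs_real_inner_le_norm _ _).trans ?_
    rw [norm_unitVec (perturb_ne_zero hx hy hM θ), one_mul]
    exact hy θ
  have hp : |⟪unitVec (x 1 + τ • y 1), y 1⟫ * ‖x 0 + τ • y 0‖ +
      ‖x 1 + τ • y 1‖ * ⟪unitVec (x 0 + τ • y 0), y 0⟫| ≤ 3 * M := by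
    refine (abs_add_le _ _).trans ?_
    rw [abs_mul, abs_mul, abs_norm, abs_norm]
    calc _ ≤ M * (3 / 2) + 3 / 2 * M := by
          gcongr
          exacts [hT 1, hT 0]
      _ = _ := by ring
  set V := (∫ θ in (0:ℝ)..1, x θ) + τ • ∫ θ in (0:ℝ)..1, y θ with hV
  have hkM : ‖∫ θ in (0:ℝ)..1, y θ‖ ≤ M := by
    simpa using intervalIntegral.norm_integral_le_of_norm_le_const (a := 0) (b := 1)
      (fun θ _ => hy θ)
  set k := ∫ θ in (0:ℝ)..1, y θ
  have hVk : |⟪V, k⟫| ≤ 3 / 2 * M :=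
    (abs_real_inner_le_norm _ _).trans
      (mul_le_mul (hab.trans hau) hkM (norm_nonneg _) (by norm_num))
  have ha2 : meanSpeed x y τ ^ (-s - 2) ≤ m ^ (-s - 2) :=
    Real.rpow_le_rpow_of_nonpos hm (hb.trans hab) (by linarith)
  have ha0 : 0 ≤ meanSpeed x y τ ^ (-s - 2) :=
    Real.rpow_nonneg (hm.le.trans (hb.trans hab)) _
  set a := meanSpeed x y τ
  set b := normMean x y τ
  have hdiff : |b ^ (-s - 2) * ⟪V, k⟫ - a ^ (-s - 2) * (a * meanSpeedDeriv x y τ)| ≤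
      (s + 2) * m ^ (-s - 3) * (24 * meanSqOsc x y) * (3 / 2 * M) +
        m ^ (-s - 2) * ((50 + 34 * M) * meanSqOsc x y) := by
    have e : b ^ (-s - 2) * ⟪V, k⟫ - a ^ (-s - 2) * (a * meanSpeedDeriv x y τ) =
        (b ^ (-s - 2) - a ^ (-s - 2)) * ⟪V, k⟫ +
          a ^ (-s - 2) * (⟪V, k⟫ - a * meanSpeedDeriv x y τ) := by ring
    rw [e]
    refine (abs_add_le _ _).trans ?_
    rw [abs_mul, abs_mul, abs_of_nonneg ha0]
    gcongr
    exact l2.trans (by gcongr)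
  rw [energyDensityDeriv]
  refine (abs_sub _ _).trans ?_
  rw [abs_mul, abs_mul (s * _), abs_mul s, abs_mul ‖_‖, abs_norm, abs_norm, abs_of_pos hs]
  calc _ ≤ 3 * M * (s * m ^ (-s - 1) * (24 * meanSqOsc x y)) + s * (3 / 2 * (3 / 2)) *
        ((s + 2) * m ^ (-s - 3) * (24 * meanSqOsc x y) * (3 / 2 * M) +
        m ^ (-s - 2) * ((50 + 34 * M) * meanSqOsc x y)) := by
        gcongr
        exact l1.trans (by gcongr)
    _ = _ := by ring

end PathAverages

section Majorant

/-- The segment `θ ↦ x (u + wθ)` of a curve. -/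
def pathAt {E : Type*} (x : ℝ → E) (u w : ℝ) : ℝ → E := fun θ => x (u + w * θ)

/-- Lebesgue measure on `(0,1] × (-1/2,1/2)`. -/
def cylMeasure : Measure (ℝ × ℝ) :=
  (volume.restrict (Ioc (0:ℝ) 1)).prod (volume.restrict (Ioo (-(1:ℝ)/2) (1/2)))

theorem cylMeasure_eq : cylMeasure = volume.restrict (Ioc (0:ℝ) 1 ×ˢ Ioo (-(1:ℝ)/2) (1/2)) := by
  rw [cylMeasure, Measure.prod_restrict]; rfl

instance : IsFiniteMeasure cylMeasure := by
  rw [cylMeasure]; infer_instance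

theorem ae_cylMeasure : ∀ᵐ p ∂cylMeasure, p.2 ≠ 0 ∧ |p.2| < 1 / 2 := by
  have h1 : ∀ᵐ w ∂(volume.restrict (Ioo (-(1:ℝ)/2) (1/2))), w ≠ 0 ∧ |w| < 1 / 2 := by
    filter_upwards [ae_restrict_mem measurableSet_Ioo,
      ae_restrict_of_ae (Measure.ae_ne volume (0:ℝ))] with w hw hw0
    exact ⟨hw0, abs_lt.2 ⟨by linarith [hw.1], hw.2⟩⟩
  exact Measure.quasiMeasurePreserving_snd.ae h1

variable {E : Type*} [NormedAddCommGroup E] {x y : ℝ → E} {α : ℝ}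

@[fun_prop]
theorem Continuous.pathAt_uncurry {Z : Type*} [TopologicalSpace Z] (hx : Continuous x)
    {f g k : Z → ℝ} (hf : Continuous f) (hg : Continuous g) (hk : Continuous k) :
    Continuous fun z => pathAt x (f z) (g z) (k z) :=
  hx.comp (hf.add (hg.mul hk))

theorem continuous_pathAt (hx : Continuous x) (u w : ℝ) : Continuous (pathAt x u w) := by
  change Continuous fun θ => pathAt x u w θ
  fun_prop

theorem lintegral_dilate_le (hα : 1 ≤ α) (hx : Continuous x) (u : ℝ) {θ : ℝ}
    (hθ : θ ∈ Ioc (0:ℝ) 1) :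
    ∫⁻ w in Ioo (-(1:ℝ)/2) (1/2), ENNReal.ofReal (|w| ^ (-α) * ‖x (u + w * θ) - x u‖ ^ 2) ≤
      ∫⁻ w in Ioo (-(1:ℝ)/2) (1/2), ENNReal.ofReal (‖x (u + w) - x u‖ ^ 2 / |w| ^ α) := by
  set F : ℝ → ℝ≥0∞ := fun w => ENNReal.ofReal (‖x (u + w) - x u‖ ^ 2 / |w| ^ α) with hF
  have hFm : Measurable F := by
    refine ENNReal.measurable_ofReal.comp (Measurable.div ?_ ?_)
    · exact Continuous.measurable (by fun_prop)
    · exact (continuous_abs.measurable).pow_const α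
  have hpt : ∀ w, ENNReal.ofReal (|w| ^ (-α) * ‖x (u + w * θ) - x u‖ ^ 2) =
      ENNReal.ofReal (θ ^ α) * F (θ * w) := by
    intro w
    rw [hF, ← ENNReal.ofReal_mul (Real.rpow_nonneg hθ.1.le _)]
    congr 1
    have : 0 < θ ^ α := Real.rpow_pos_of_pos hθ.1 _
    rw [abs_mul, abs_of_pos hθ.1, Real.mul_rpow hθ.1.le (abs_nonneg _),
      Real.rpow_neg (abs_nonneg _), mul_comm w θ]
    field_simp
  simp_rw [hpt]
  rw [lintegral_const_mul _ (show Measurable fun w => F (θ * w) from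
      hFm.comp (measurable_const_mul θ)),
    ← lintegral_indicator measurableSet_Ioo, ← lintegral_indicator measurableSet_Ioo]
  have hle : ∀ w, (Ioo (-(1:ℝ)/2) (1/2)).indicator (fun w => F (θ * w)) w ≤
      (Ioo (-(1:ℝ)/2) (1/2)).indicator F (θ * w) := by
    intro w
    by_cases hw : w ∈ Ioo (-(1:ℝ)/2) (1/2)
    · have hw' : θ * w ∈ Ioo (-(1:ℝ)/2) (1/2) := by
        constructor <;> nlinarith [hw.1, hw.2, hθ.1, hθ.2]
      rw [indicator_of_mem hw, indicator_of_mem hw']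
    · rw [indicator_of_notMem hw]; exact zero_le
  have hmap : ∫⁻ w, (Ioo (-(1:ℝ)/2) (1/2)).indicator F (θ * w) =
      ENNReal.ofReal |θ⁻¹| * ∫⁻ w, (Ioo (-(1:ℝ)/2) (1/2)).indicator F w := by
    rw [← lintegral_map (hFm.indicator measurableSet_Ioo) (measurable_const_mul θ),
      Real.map_volume_mul_left hθ.1.ne', lintegral_smul_measure, smul_eq_mul]
  calc _ ≤ ENNReal.ofReal (θ ^ α) * (ENNReal.ofReal |θ⁻¹| *
        ∫⁻ w, (Ioo (-(1:ℝ)/2) (1/2)).indicator F w) := by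
        rw [← hmap]; gcongr; exact hle _
    _ ≤ 1 * ∫⁻ w, (Ioo (-(1:ℝ)/2) (1/2)).indicator F w := by
        rw [← mul_assoc, ← ENNReal.ofReal_mul (Real.rpow_nonneg hθ.1.le _)]
        gcongr
        rw [ENNReal.ofReal_le_one, abs_of_pos (inv_pos.2 hθ.1)]
        rw [← div_eq_mul_inv, div_le_one hθ.1]
        simpa using Real.rpow_le_rpow_of_exponent_ge hθ.1 hθ.2 hα
    _ = _ := one_mul _

theorem lintegral_meanSqOsc_lt_top (hα : 1 ≤ α) (hx : Continuous x)
    (hg : gagliardoSq ((α - 1) / 2) x < ⊤) :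
    ∫⁻ p, ENNReal.ofReal (|p.2| ^ (-α) *
      ∫ θ in (0:ℝ)..1, ‖pathAt x p.1 p.2 θ - pathAt x p.1 p.2 0‖ ^ 2) ∂cylMeasure < ⊤ := by
  refine lt_of_le_of_lt ?_ hg
  have hpt : ∀ p : ℝ × ℝ, ENNReal.ofReal (|p.2| ^ (-α) *
      ∫ θ in (0:ℝ)..1, ‖pathAt x p.1 p.2 θ - pathAt x p.1 p.2 0‖ ^ 2) =
      ∫⁻ θ in Ioc (0:ℝ) 1, ENNReal.ofReal (|p.2| ^ (-α) * ‖x (p.1 + p.2 * θ) - x p.1‖ ^ 2) := by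
    intro p
    have h0 := Real.rpow_nonneg (abs_nonneg p.2) (-α)
    have e : ∀ θ, ‖pathAt x p.1 p.2 θ - pathAt x p.1 p.2 0‖ ^ 2 =
      ‖x (p.1 + p.2 * θ) - x p.1‖ ^ 2 := fun θ => by simp [pathAt]
    simp_rw [e]
    rw [← intervalIntegral.integral_const_mul, intervalIntegral.integral_of_le zero_le_one,
      ofReal_integral_eq_lintegral_ofReal]
    · exact (Continuous.integrableOn_Icc (by fun_prop)).mono_set Ioc_subset_Icc_self
    · exact Eventually.of_forall fun θ => mul_nonneg h0 (by positivity)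
  have hm : Measurable fun q : (ℝ × ℝ) × ℝ =>
      ENNReal.ofReal (|q.1.2| ^ (-α) * ‖x (q.1.1 + q.1.2 * q.2) - x q.1.1‖ ^ 2) := by
    refine ENNReal.measurable_ofReal.comp (Measurable.mul ?_ ?_)
    · exact Measurable.pow_const (Continuous.measurable (by fun_prop)) _
    · exact Continuous.measurable (by fun_prop)
  simp_rw [hpt]
  rw [cylMeasure, lintegral_prod _ hm.lintegral_prod_right'.aemeasurable, gagliardoSq]
  refine lintegral_mono fun u => ?_
  have swap := lintegral_lintegral_swap (μ := volume.restrict (Ioo (-(1:ℝ)/2) (1/2)))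
    (ν := volume.restrict (Ioc (0:ℝ) 1))
    (f := fun w θ => ENNReal.ofReal (|w| ^ (-α) * ‖x (u + w * θ) - x u‖ ^ 2))
    (hm.comp (by fun_prop : Measurable fun q : ℝ × ℝ => ((u, q.1), q.2))).aemeasurable
  refine swap.trans_le ?_
  have e : 1 + 2 * ((α - 1) / 2) = α := by ring
  rw [e]
  calc _ ≤ ∫⁻ _ in Ioc (0:ℝ) 1, ∫⁻ w in Ioo (-(1:ℝ)/2) (1/2),
        ENNReal.ofReal (‖x (u + w) - x u‖ ^ 2 / |w| ^ α) :=
        setLIntegral_mono' measurableSet_Ioc fun θ hθ => lintegral_dilate_le hα hx u hθ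
    _ = _ := by simp

theorem integrable_meanSqOsc (hα : 1 ≤ α) (hx : Continuous x) (hy : Continuous y)
    (hgx : gagliardoSq ((α - 1) / 2) x < ⊤) (hgy : gagliardoSq ((α - 1) / 2) y < ⊤) :
    Integrable (fun p : ℝ × ℝ => |p.2| ^ (-α) *
      meanSqOsc (pathAt x p.1 p.2) (pathAt y p.1 p.2)) cylMeasure := by
  have hpow : Measurable fun p : ℝ × ℝ => |p.2| ^ (-α) :=
    Measurable.pow_const (Continuous.measurable (by fun_prop)) _
  have aux : ∀ z : ℝ → E, Continuous z → gagliardoSq ((α - 1) / 2) z < ⊤ →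
      Integrable (fun p : ℝ × ℝ => |p.2| ^ (-α) *
        ∫ θ in (0:ℝ)..1, ‖pathAt z p.1 p.2 θ - pathAt z p.1 p.2 0‖ ^ 2) cylMeasure := by
    intro z hz hg
    refine ⟨?_, ?_⟩
    · refine (hpow.mul (Continuous.measurable ?_)).aestronglyMeasurable
      refine intervalIntegral.continuous_parametric_intervalIntegral_of_continuous' ?_ 0 1
      simp only [Function.uncurry_def]
      fun_prop
    · rw [hasFiniteIntegral_iff_ofReal]
      · exact lintegral_meanSqOsc_lt_top hα hz hg
      · exact Eventually.of_forall fun p => mul_nonneg (Real.rpow_nonneg (abs_nonneg _) _)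
          (intervalIntegral.integral_nonneg zero_le_one fun _ _ => by positivity)
  refine ((aux x hx hgx).add (aux y hy hgy)).congr (Eventually.of_forall fun p => ?_)
  simp only [Pi.add_apply, meanSqOsc]
  rw [← mul_add, intervalIntegral.integral_add]
  · have := continuous_pathAt hx p.1 p.2
    exact Continuous.intervalIntegrable (by fun_prop) _ _
  · have := continuous_pathAt hy p.1 p.2
    exact Continuous.intervalIntegrable (by fun_prop) _ _

end Majorant

section Curves

variable {n : ℕ} {γ h : ℝ → Rn n} {α τ M : ℝ}

theorem sub_eq_smul_integral_pathAt (hγ : ContDiff ℝ 1 γ) (u w : ℝ) :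
    γ (u + w) - γ u = w • ∫ θ in (0:ℝ)..1, pathAt (deriv γ) u w θ := by
  simp only [pathAt]
  rw [intervalIntegral.smul_integral_comp_add_mul (deriv γ) w u,
    intervalIntegral.integral_deriv_eq_sub' γ rfl
      (fun _ _ => (hγ.differentiable one_ne_zero).differentiableAt)
      (hγ.continuous_deriv le_rfl).continuousOn]
  simp

theorem deriv_add_smul_fun (hγ : ContDiff ℝ 1 γ) (hh : ContDiff ℝ 1 h) (τ u : ℝ) :
    deriv (γ + τ • h) u = deriv γ u + τ • deriv h u := by
  have h1 := ((hγ.differentiable one_ne_zero) u).hasDerivAt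
  have h2 := ((hh.differentiable one_ne_zero) u).hasDerivAt
  exact (h1.add (h2.const_smul τ)).deriv

theorem norm_gap_perturb (hγ : ContDiff ℝ 1 γ) (hh : ContDiff ℝ 1 h) (τ u w : ℝ) :
    ‖(γ + τ • h) (u + w) - (γ + τ • h) u‖ =
      |w| * normMean (pathAt (deriv γ) u w) (pathAt (deriv h) u w) τ := by
  have e : (γ + τ • h) (u + w) - (γ + τ • h) u =
      (γ (u + w) - γ u) + τ • (h (u + w) - h u) := by
    simp only [Pi.add_apply, Pi.smul_apply, smul_sub]; abel
  rw [e, sub_eq_smul_integral_pathAt hγ, sub_eq_smul_integral_pathAt hh, smul_comm τ w,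
    ← smul_add, norm_smul, normMean, Real.norm_eq_abs]

theorem arcLen_perturb (hγ : ContDiff ℝ 1 γ) (hh : ContDiff ℝ 1 h) (τ u w : ℝ) :
    arcLen (γ + τ • h) u w =
      |w| * meanSpeed (pathAt (deriv γ) u w) (pathAt (deriv h) u w) τ := by
  have e := intervalIntegral.smul_integral_comp_add_mul (a := 0) (b := 1)
    (fun t => ‖deriv γ t + τ • deriv h t‖) w u
  simp only [mul_zero, add_zero, mul_one] at e
  simp only [arcLen, deriv_add_smul_fun hγ hh]
  rw [← e, smul_eq_mul, abs_mul]
  congr 1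
  exact abs_of_nonneg (intervalIntegral.integral_nonneg zero_le_one fun _ _ => norm_nonneg _)

theorem curveLen_perturb (hγ : ContDiff ℝ 1 γ) (hh : ContDiff ℝ 1 h) (τ : ℝ) :
    curveLen (γ + τ • h) = meanSpeed (deriv γ) (deriv h) τ := by
  simp only [curveLen, meanSpeed, deriv_add_smul_fun hγ hh]

theorem Function.Periodic.deriv_periodic (hp : Function.Periodic γ 1) :
    Function.Periodic (deriv γ) 1 := by
  intro u
  rw [← deriv_comp_add_const, hp.funext]

theorem norm_sub_le_integral_norm_deriv (hγ : ContDiff ℝ 1 γ) {a b : ℝ} (hab : a ≤ b) :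
    ‖γ b - γ a‖ ≤ ∫ t in a..b, ‖deriv γ t‖ := by
  rw [← intervalIntegral.integral_deriv_eq_sub' γ rfl
      (fun _ _ => (hγ.differentiable one_ne_zero).differentiableAt)
      (hγ.continuous_deriv le_rfl).continuousOn]
  exact intervalIntegral.norm_integral_le_integral_norm hab

/-- The intrinsic distance dominates the Euclidean distance. -/
theorem norm_sub_le_idist (hγ : ContDiff ℝ 1 γ) (hp : Function.Periodic γ 1) (u : ℝ) {w : ℝ}
    (hw : |w| ≤ 1) : ‖γ (u + w) - γ u‖ ≤ idist γ u w := by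
  obtain ⟨hw1, hw2⟩ := abs_le.1 hw
  have hc : Continuous fun t => ‖deriv γ t‖ := (hγ.continuous_deriv le_rfl).norm
  have hper : Function.Periodic (fun t => ‖deriv γ t‖) 1 := fun t => by
    simp only [hp.deriv_periodic t]
  have hL : ∀ t, curveLen γ = ∫ θ in t..t + 1, ‖deriv γ θ‖ := fun t => by
    rw [curveLen, hper.intervalIntegral_add_eq t 0, zero_add]
  have ii : ∀ a b, IntervalIntegrable (fun t => ‖deriv γ t‖) volume a b :=
    fun a b => hc.intervalIntegrable a b
  rcases le_total 0 w with h0 | h0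
  · have hA : arcLen γ u w = ∫ θ in u..(u + w), ‖deriv γ θ‖ :=
      abs_of_nonneg (intervalIntegral.integral_nonneg (by linarith) fun _ _ => norm_nonneg _)
    refine le_min ?_ ?_
    · rw [hA]; exact norm_sub_le_integral_norm_deriv hγ (by linarith)
    · rw [hA, hL u, intervalIntegral.integral_interval_sub_left (ii _ _) (ii _ _), ← hp u,
        norm_sub_rev]
      exact norm_sub_le_integral_norm_deriv hγ (by linarith)
  · have hA : arcLen γ u w = ∫ θ in (u + w)..u, ‖deriv γ θ‖ := by
      rw [arcLen, intervalIntegral.integral_symm, abs_neg]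
      exact abs_of_nonneg (intervalIntegral.integral_nonneg (by linarith) fun _ _ => norm_nonneg _)
    refine le_min ?_ ?_
    · rw [hA, norm_sub_rev]; exact norm_sub_le_integral_norm_deriv hγ (by linarith)
    · rw [hA, hL (u + w), intervalIntegral.integral_interval_sub_left (ii _ _) (ii _ _),
        ← hp (u + w)]
      exact norm_sub_le_integral_norm_deriv hγ (by linarith)

theorem Function.Periodic.exists_norm_le {f : ℝ → Rn n} (hp : Function.Periodic f 1)
    (hf : Continuous f) : ∃ M, 0 ≤ M ∧ ∀ u, ‖f u‖ ≤ M := by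
  obtain ⟨M, hM⟩ := isCompact_Icc.exists_bound_of_continuousOn (s := Icc (0:ℝ) 1) hf.continuousOn
  refine ⟨M, (norm_nonneg _).trans (hM 0 (by simp)), fun u => ?_⟩
  obtain ⟨v, hv, e⟩ := hp.exists_mem_Ico₀ one_pos u
  rw [e]
  exact hM v ⟨hv.1, hv.2.le⟩

theorem abs_meanSpeed_sub_one_le {E : Type*} [NormedAddCommGroup E] [InnerProductSpace ℝ E]
    {x y : ℝ → E} (hxc : Continuous x) (hyc : Continuous y)
    (hx : ∀ θ, ‖x θ‖ = 1) (hy : ∀ θ, ‖y θ‖ ≤ M) : |meanSpeed x y τ - 1| ≤ |τ| * M := by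
  have e : meanSpeed x y τ - 1 = ∫ θ in (0:ℝ)..1, (‖x θ + τ • y θ‖ - ‖x θ‖) := by
    rw [intervalIntegral.integral_sub (Continuous.intervalIntegrable (by fun_prop) _ _)
      (Continuous.intervalIntegrable (by fun_prop) _ _)]
    simp [hx, meanSpeed]
  have := intervalIntegral.norm_integral_le_of_norm_le_const (a := 0) (b := 1) (C := |τ| * M)
    (f := fun θ => ‖x θ + τ • y θ‖ - ‖x θ‖) fun θ _ => by
      refine (abs_norm_sub_norm_le _ _).trans ?_
      rw [add_sub_cancel_left, norm_smul, Real.norm_eq_abs]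
      exact mul_le_mul_of_nonneg_left (hy θ) (abs_nonneg _)
  rw [e]
  simpa using this

theorem continuous_normMean {x y : ℝ → Rn n} (hx : Continuous x) (hy : Continuous y) (τ : ℝ) :
    Continuous fun p : ℝ × ℝ => normMean (pathAt x p.1 p.2) (pathAt y p.1 p.2) τ := by
  have : ∀ z : ℝ → Rn n, Continuous z →
      Continuous fun p : ℝ × ℝ => ∫ θ in (0:ℝ)..1, pathAt z p.1 p.2 θ := fun z hz => by
    refine intervalIntegral.continuous_parametric_intervalIntegral_of_continuous' ?_ 0 1
    simp only [Function.uncurry_def]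
    fun_prop
  exact ((this x hx).add ((this y hy).const_smul τ)).norm

theorem continuous_meanSpeed {x y : ℝ → Rn n} (hx : Continuous x) (hy : Continuous y) (τ : ℝ) :
    Continuous fun p : ℝ × ℝ => meanSpeed (pathAt x p.1 p.2) (pathAt y p.1 p.2) τ := by
  refine intervalIntegral.continuous_parametric_intervalIntegral_of_continuous' ?_ 0 1
  simp only [Function.uncurry_def]
  fun_prop

/-- An injective closed arc-length curve of class `C¹` is bi-Lipschitz. -/
theorem exists_normMean_lower_bound (hγ : ContDiff ℝ 1 γ) (hp : Function.Periodic γ 1)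
    (hinj : PerInjective γ) (harc : ArcLengthParam γ) : ∃ c : ℝ, 0 < c ∧ ∀ u w : ℝ, |w| ≤ 1 / 2 →
      c ≤ ‖∫ θ in (0:ℝ)..1, pathAt (deriv γ) u w θ‖ := by
  have hc := hγ.continuous_deriv le_rfl
  obtain ⟨F, hF⟩ : ∃ F : ℝ × ℝ → ℝ, ∀ u w, F (u, w) = ‖∫ θ in (0:ℝ)..1, pathAt (deriv γ) u w θ‖ :=
    ⟨fun p => ‖∫ θ in (0:ℝ)..1, pathAt (deriv γ) p.1 p.2 θ‖, fun _ _ => rfl⟩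
  have hcont : Continuous F := by
    have := continuous_normMean hc hc 0
    simp only [normMean, zero_smul, add_zero] at this
    exact this.congr fun p => (hF p.1 p.2).symm
  have hper : ∀ w, Function.Periodic (fun u => F (u, w)) 1 := fun w u => by
    simp only [hF, pathAt]
    congr 2
    ext1 θ
    rw [show u + 1 + w * θ = u + w * θ + 1 by ring, hp.deriv_periodic]
  have hpos : ∀ u w, |w| ≤ 1 / 2 → 0 < F (u, w) := by
    intro u w hw
    rw [hF]
    by_cases h0 : w = 0
    · simp [h0, pathAt, harc u]
    · rw [norm_pos_iff]
      intro hz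
      have e := sub_eq_smul_integral_pathAt hγ u w
      rw [hz, smul_zero, sub_eq_zero] at e
      obtain ⟨k, hk⟩ := hinj _ _ e
      have hkw : w = -(k : ℝ) := by linarith
      obtain ⟨hw1, hw2⟩ := abs_le.1 hw
      have h1 : (-1 : ℝ) < k := by linarith
      have h2 : (k : ℝ) < 1 := by linarith
      have h1' : -1 < k := by exact_mod_cast h1
      have h2' : k < 1 := by exact_mod_cast h2
      have : k = 0 := by omega
      exact h0 (by rw [hkw, this]; simp)
  have hK : IsCompact (Icc (0:ℝ) 1 ×ˢ Icc (-(1 / 2 : ℝ)) (1 / 2)) := isCompact_Icc.prod isCompact_Icc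
  obtain ⟨p, hpK, hmin⟩ := hK.exists_isMinOn
    ⟨(0, 0), by constructor <;> constructor <;> norm_num⟩ hcont.continuousOn
  rw [isMinOn_iff] at hmin
  refine ⟨F p, hpos p.1 p.2 (abs_le.2 hpK.2), fun u w hw => ?_⟩
  obtain ⟨v, hv, e⟩ := (hper w).exists_mem_Ico₀ one_pos u
  rw [← hF]
  exact (hmin (v, w) ⟨⟨hv.1, hv.2.le⟩, abs_le.1 hw⟩).trans_eq e.symm

/-- The part of the energy integrand due to the difference of arc length and intrinsic
distance. -/
def arcCorrection (α : ℝ) (γ : ℝ → Rn n) (u w : ℝ) : ℝ :=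
  (arcLen γ u w ^ (-α) - idist γ u w ^ (-α)) * ‖deriv γ (u + w)‖ * ‖deriv γ u‖

theorem ohIntegrand_perturb_eq (hγ : ContDiff ℝ 1 γ) (hh : ContDiff ℝ 1 h)
    (hpγ : Function.Periodic γ 1) (hph : Function.Periodic h 1) (α τ u : ℝ) {w : ℝ}
    (hw : |w| ≤ 1) :
    ohIntegrand α (γ + τ • h) u w =
      |w| ^ (-α) * energyDensity α (pathAt (deriv γ) u w) (pathAt (deriv h) u w) τ +
        arcCorrection α (γ + τ • h) u w := by
  have hb : 0 ≤ normMean (pathAt (deriv γ) u w) (pathAt (deriv h) u w) τ := norm_nonneg _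
  have ha : 0 ≤ meanSpeed (pathAt (deriv γ) u w) (pathAt (deriv h) u w) τ :=
    intervalIntegral.integral_nonneg zero_le_one fun _ _ => norm_nonneg _
  have hd : 0 ≤ idist (γ + τ • h) u w :=
    (norm_nonneg _).trans (norm_sub_le_idist (hγ.add (hh.const_smul τ)) (hpγ.add (hph.smul τ)) u hw)
  simp only [ohIntegrand, arcCorrection, energyDensity]
  rw [norm_gap_perturb hγ hh, arcLen_perturb hγ hh, deriv_add_smul_fun hγ hh,
    deriv_add_smul_fun hγ hh, one_div, one_div, ← Real.rpow_neg (by positivity),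
    ← Real.rpow_neg hd, Real.mul_rpow (abs_nonneg _) hb, Real.mul_rpow (abs_nonneg _) ha]
  simp only [pathAt, mul_one, mul_zero, add_zero]
  ring

/-- The correction term vanishes where the parametrization is shorter than its complement,
and is of first order in the perturbation elsewhere. -/
theorem abs_arcCorrection_le (hγ : ContDiff ℝ 1 γ) (hh : ContDiff ℝ 1 h) (hα : 0 < α)
    (harc : ArcLengthParam γ) (hM : ∀ u, ‖deriv h u‖ ≤ M) (hτ : |τ| * M ≤ 1 / 10) (u : ℝ) {w : ℝ}
    (hw : |w| ≤ 1 / 2) :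
    |arcCorrection α (γ + τ • h) u w| ≤ 9 / 2 * (α * (1 / 4) ^ (-α - 1)) * (|τ| * M) ∧
      (|w| * (1 + |τ| * M) ≤ (1 - |τ| * M) / 2 → arcCorrection α (γ + τ • h) u w = 0) := by
  have hx := hγ.continuous_deriv le_rfl
  have hy := hh.continuous_deriv le_rfl
  have hL := abs_meanSpeed_sub_one_le (τ := τ) hx hy harc hM
  have hA := abs_meanSpeed_sub_one_le (τ := τ) (continuous_pathAt hx u w)
    (continuous_pathAt hy u w) (fun θ => harc _) (fun θ => hM _)
  rw [← curveLen_perturb hγ hh] at hL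
  have hAe := arcLen_perturb hγ hh τ u w
  set a := meanSpeed (pathAt (deriv γ) u w) (pathAt (deriv h) u w) τ
  set L := curveLen (γ + τ • h)
  set A := arcLen (γ + τ • h) u w with hAdef
  set ξ := |τ| * M
  have hξ : 0 ≤ ξ := (abs_nonneg _).trans hL
  obtain ⟨hL1, hL2⟩ := abs_le.1 hL
  obtain ⟨hA1, hA2⟩ := abs_le.1 hA
  have hAle : A ≤ |w| * (1 + ξ) := by
    rw [hAe]; exact mul_le_mul_of_nonneg_left (by linarith) (abs_nonneg _)
  have hAle2 : A ≤ (1 + ξ) / 2 := hAle.trans (by nlinarith)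
  have hd : idist (γ + τ • h) u w = min A (L - A) := rfl
  have hzero : A ≤ L - A → arcCorrection α (γ + τ • h) u w = 0 := fun hle => by
    rw [arcCorrection, hd, min_eq_left hle, ← hAdef]; simp
  have hn : ∀ t, ‖deriv (γ + τ • h) t‖ ≤ 11 / 10 := fun t => by
    rw [deriv_add_smul_fun hγ hh]
    refine (norm_add_le _ _).trans ?_
    rw [harc t, norm_smul, Real.norm_eq_abs]
    linarith [mul_le_mul_of_nonneg_left (hM t) (abs_nonneg τ)]
  refine ⟨?_, fun hle => hzero (by linarith)⟩
  have hC : 0 ≤ α * (1 / 4 : ℝ) ^ (-α - 1) := by positivity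
  rcases le_total A (L - A) with hle | hle
  · rw [hzero hle, abs_zero]; positivity
  · rw [arcCorrection, hd, min_eq_right hle, ← hAdef, abs_mul, abs_mul, abs_norm, abs_norm]
    have h1 := rpow_neg_lipschitz hα (m := 1 / 4) (a := A) (b := L - A) (by norm_num)
      (by linarith) (by linarith)
    have h2 : |A - (L - A)| ≤ 2 * ξ := by rw [abs_le]; constructor <;> linarith
    have h3 := h1.trans (mul_le_mul_of_nonneg_left h2 hC)
    calc _ ≤ (α * (1 / 4 : ℝ) ^ (-α - 1) * (2 * ξ)) * (11 / 10) * (11 / 10) := by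
          gcongr
          · exact hn _
          · exact hn _
      _ ≤ _ := by
          have : 0 ≤ α * (1 / 4 : ℝ) ^ (-α - 1) * ξ := by positivity
          nlinarith

end Curves

section Variation

variable {n : ℕ} {γ h : ℝ → Rn n} {α τ M : ℝ}

theorem energyDensityDeriv_zero {x y : ℝ → Rn n} (hx : ∀ θ, ‖x θ‖ = 1) (s : ℝ) :
    energyDensityDeriv s x y 0 =
      (⟪x 1, y 1⟫ + ⟪x 0, y 0⟫) * (‖∫ θ in (0:ℝ)..1, x θ‖ ^ (-s) - 1) -
        s * (‖∫ θ in (0:ℝ)..1, x θ‖ ^ (-s - 2) * ⟪∫ θ in (0:ℝ)..1, x θ, ∫ θ in (0:ℝ)..1, y θ⟫ -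
          ∫ θ in (0:ℝ)..1, ⟪x θ, y θ⟫) := by
  simp [energyDensityDeriv, meanSpeed, meanSpeedDeriv, normMean, unitVec, hx]

theorem continuous_integral_pathAt {x : ℝ → Rn n} (hx : Continuous x) :
    Continuous fun p : ℝ × ℝ => ∫ θ in (0:ℝ)..1, pathAt x p.1 p.2 θ := by
  refine intervalIntegral.continuous_parametric_intervalIntegral_of_continuous' ?_ 0 1
  simp only [Function.uncurry_def]
  fun_prop

theorem continuous_integral_inner_pathAt {x y : ℝ → Rn n} (hx : Continuous x)
    (hy : Continuous y) :
    Continuous fun p : ℝ × ℝ => ∫ θ in (0:ℝ)..1, ⟪pathAt x p.1 p.2 θ, pathAt y p.1 p.2 θ⟫ := by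
  refine intervalIntegral.continuous_parametric_intervalIntegral_of_continuous' ?_ 0 1
  simp only [Function.uncurry_def]
  fun_prop

theorem measurable_abs_snd_rpow (s : ℝ) : Measurable fun p : ℝ × ℝ => |p.2| ^ s :=
  (Continuous.measurable (by fun_prop)).pow_const s

theorem measurable_energyDensity {x y : ℝ → Rn n} (hx : Continuous x) (hy : Continuous y)
    (s τ : ℝ) :
    Measurable fun p : ℝ × ℝ => energyDensity s (pathAt x p.1 p.2) (pathAt y p.1 p.2) τ := by
  have h1 := (continuous_normMean hx hy τ).measurable
  have h2 := (continuous_meanSpeed hx hy τ).measurable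
  have h3 : Measurable fun p : ℝ × ℝ => ‖pathAt x p.1 p.2 1 + τ • pathAt y p.1 p.2 1‖ *
      ‖pathAt x p.1 p.2 0 + τ • pathAt y p.1 p.2 0‖ := Continuous.measurable (by fun_prop)
  exact h3.mul ((h1.pow_const _).sub (h2.pow_const _))

theorem measurable_energyDensityDeriv_zero {x y : ℝ → Rn n} (hx : Continuous x)
    (hy : Continuous y) (hx1 : ∀ θ, ‖x θ‖ = 1) (s : ℝ) :
    Measurable fun p : ℝ × ℝ => energyDensityDeriv s (pathAt x p.1 p.2) (pathAt y p.1 p.2) 0 := by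
  rw [funext fun p : ℝ × ℝ => energyDensityDeriv_zero (x := pathAt x p.1 p.2)
    (y := pathAt y p.1 p.2) (fun θ => hx1 _) s]
  have h1 := continuous_integral_pathAt hx
  have h2 := continuous_integral_pathAt hy
  have h3 : Measurable fun p : ℝ × ℝ => ⟪pathAt x p.1 p.2 1, pathAt y p.1 p.2 1⟫ +
      ⟪pathAt x p.1 p.2 0, pathAt y p.1 p.2 0⟫ := Continuous.measurable (by fun_prop)
  exact (h3.mul ((h1.norm.measurable.pow_const _).sub_const _)).sub
    (((h1.norm.measurable.pow_const _).mul (h1.inner h2).measurable).sub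
      (continuous_integral_inner_pathAt hx hy).measurable |>.const_mul s)

theorem measurable_arcCorrection (hγ : ContDiff ℝ 1 γ) (hh : ContDiff ℝ 1 h) (α τ : ℝ) :
    Measurable fun p : ℝ × ℝ => arcCorrection α (γ + τ • h) p.1 p.2 := by
  have hx := hγ.continuous_deriv le_rfl
  have hy := hh.continuous_deriv le_rfl
  simp only [arcCorrection, idist, arcLen_perturb hγ hh, deriv_add_smul_fun hγ hh]
  have h1 : Continuous fun p : ℝ × ℝ =>
      |p.2| * meanSpeed (pathAt (deriv γ) p.1 p.2) (pathAt (deriv h) p.1 p.2) τ :=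
    continuous_snd.abs.mul (continuous_meanSpeed hx hy τ)
  have h2 : Continuous fun p : ℝ × ℝ =>
      min (|p.2| * meanSpeed (pathAt (deriv γ) p.1 p.2) (pathAt (deriv h) p.1 p.2) τ)
        (curveLen (γ + τ • h) -
          |p.2| * meanSpeed (pathAt (deriv γ) p.1 p.2) (pathAt (deriv h) p.1 p.2) τ) :=
    h1.min (continuous_const.sub h1)
  have h3 : Measurable fun p : ℝ × ℝ => ‖deriv γ (p.1 + p.2) + τ • deriv h (p.1 + p.2)‖ :=
    Continuous.measurable (by fun_prop)
  have h4 : Measurable fun p : ℝ × ℝ => ‖deriv γ p.1 + τ • deriv h p.1‖ :=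
    Continuous.measurable (by fun_prop)
  exact (((h1.measurable.pow_const _).sub (h2.measurable.pow_const _)).mul h3).mul h4

theorem ohIntegrand_nonneg (hγ : ContDiff ℝ 1 γ) (hp : Function.Periodic γ 1) (hα : 0 < α)
    (u : ℝ) {w : ℝ} (hw : |w| ≤ 1) (hne : 0 < ‖γ (u + w) - γ u‖) : 0 ≤ ohIntegrand α γ u w := by
  have hle := norm_sub_le_idist hγ hp u hw
  refine mul_nonneg (mul_nonneg (sub_nonneg.2 ?_) (norm_nonneg _)) (norm_nonneg _)
  exact one_div_le_one_div_of_le (by positivity) (Real.rpow_le_rpow hne.le hle hα.le)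

/-- The energy is the integral of its two parts over the cylinder. -/
theorem oharaER_perturb_eq (hγ : ContDiff ℝ 1 γ) (hh : ContDiff ℝ 1 h)
    (hpγ : Function.Periodic γ 1) (hph : Function.Periodic h 1) (hα : 0 < α)
    (hpos : ∀ᵐ p ∂cylMeasure,
      0 < normMean (pathAt (deriv γ) p.1 p.2) (pathAt (deriv h) p.1 p.2) τ)
    (hint : Integrable (fun p : ℝ × ℝ => |p.2| ^ (-α) *
      energyDensity α (pathAt (deriv γ) p.1 p.2) (pathAt (deriv h) p.1 p.2) τ) cylMeasure)
    (hint' : Integrable (fun p : ℝ × ℝ => arcCorrection α (γ + τ • h) p.1 p.2) cylMeasure) :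
    oharaER α (γ + τ • h) =
      (∫ p : ℝ × ℝ, |p.2| ^ (-α) *
        energyDensity α (pathAt (deriv γ) p.1 p.2) (pathAt (deriv h) p.1 p.2) τ ∂cylMeasure) +
      ∫ p : ℝ × ℝ, arcCorrection α (γ + τ • h) p.1 p.2 ∂cylMeasure := by
  have hae : (fun p : ℝ × ℝ => ohIntegrand α (γ + τ • h) p.1 p.2) =ᵐ[cylMeasure] fun p =>
      |p.2| ^ (-α) * energyDensity α (pathAt (deriv γ) p.1 p.2) (pathAt (deriv h) p.1 p.2) τ +
        arcCorrection α (γ + τ • h) p.1 p.2 := by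
    filter_upwards [ae_cylMeasure] with p hp
    exact ohIntegrand_perturb_eq hγ hh hpγ hph α τ p.1 (by linarith [hp.2])
  have hi : Integrable (fun p : ℝ × ℝ => ohIntegrand α (γ + τ • h) p.1 p.2) cylMeasure :=
    (hint.add hint').congr hae.symm
  have h0 : 0 ≤ᵐ[cylMeasure] fun p : ℝ × ℝ => ohIntegrand α (γ + τ • h) p.1 p.2 := by
    filter_upwards [ae_cylMeasure, hpos] with p hp hb
    refine ohIntegrand_nonneg (hγ.add (hh.const_smul τ)) (hpγ.add (hph.smul τ)) hα p.1
      (by linarith [hp.2]) ?_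
    exact (mul_pos (abs_pos.2 hp.1) hb).trans_eq (norm_gap_perturb hγ hh τ p.1 p.2).symm
  rw [← integral_add hint hint', ← integral_congr_ae hae,
    integral_eq_lintegral_of_nonneg_ae h0 hi.aestronglyMeasurable, oharaER, oharaE, cylMeasure,
    lintegral_prod _ hi.aestronglyMeasurable.aemeasurable.ennreal_ofReal]

/-- The part of the energy coming from the correction term is negligible to first order. -/
theorem tendsto_integral_arcCorrection_div (hγ : ContDiff ℝ 1 γ) (hh : ContDiff ℝ 1 h)
    (hα : 0 < α) (harc : ArcLengthParam γ) (hM : ∀ u, ‖deriv h u‖ ≤ M) :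
    Tendsto (fun τ : ℝ => (∫ p : ℝ × ℝ, arcCorrection α (γ + τ • h) p.1 p.2 ∂cylMeasure) / τ)
      (𝓝[≠] (0:ℝ)) (𝓝 0) := by
  have hsmall : Tendsto (fun τ : ℝ => |τ| * M) (𝓝[≠] (0:ℝ)) (𝓝 0) := by
    have : Continuous fun τ : ℝ => |τ| * M := by fun_prop
    simpa using (this.tendsto 0).mono_left nhdsWithin_le_nhds
  simp only [← integral_div]
  have hev : ∀ᶠ τ in 𝓝[≠] (0:ℝ), |τ| * M ≤ 1 / 10 := hsmall.eventually (Iic_mem_nhds (by norm_num))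
  have hlim : ∀ᵐ p ∂cylMeasure, Tendsto (fun τ : ℝ => arcCorrection α (γ + τ • h) p.1 p.2 / τ)
      (𝓝[≠] (0:ℝ)) (𝓝 0) := by
    filter_upwards [ae_cylMeasure] with p hp
    have hl : Tendsto (fun τ : ℝ => (1 - |τ| * M) / 2 - |p.2| * (1 + |τ| * M)) (𝓝[≠] (0:ℝ))
        (𝓝 ((1 - 0) / 2 - |p.2| * (1 + 0))) :=
      ((tendsto_const_nhds.sub hsmall).div_const 2).sub
        (tendsto_const_nhds.mul (tendsto_const_nhds.add hsmall))
    refine tendsto_const_nhds.congr' ?_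
    filter_upwards [hev, hl.eventually (Ioi_mem_nhds (a := 0) (by linarith [hp.2]))] with τ h1 h2
    rw [(abs_arcCorrection_le hγ hh hα harc hM h1 p.1 hp.2.le).2 (sub_nonneg.1 (le_of_lt h2)),
      zero_div]
  have := tendsto_integral_filter_of_dominated_convergence
    (fun _ : ℝ × ℝ => 9 / 2 * (α * (1 / 4) ^ (-α - 1)) * M) (μ := cylMeasure)
    (l := 𝓝[≠] (0:ℝ)) (f := fun _ => (0:ℝ))
    (F := fun τ p => arcCorrection α (γ + τ • h) p.1 p.2 / τ)
    (Eventually.of_forall fun τ =>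
      ((measurable_arcCorrection hγ hh α τ).div_const τ).aestronglyMeasurable)
    (by
      filter_upwards [hev, self_mem_nhdsWithin] with τ h1 h2
      filter_upwards [ae_cylMeasure] with p hp
      have := (abs_arcCorrection_le hγ hh hα harc hM h1 p.1 hp.2.le).1
      rw [norm_div, Real.norm_eq_abs, Real.norm_eq_abs, div_le_iff₀ (abs_pos.2 h2)]
      exact this.trans_eq (by ring))
    (integrable_const _) hlim
  simpa using this

/-- First variation of the energy as an absolutely convergent integral. -/
theorem hasDirDeriv_oharaER (hα : α ∈ Ioo (2:ℝ) 3) (hγ : MemH1 ((α - 1) / 2) γ)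
    (hinj : PerInjective γ) (harc : ArcLengthParam γ) (hh : MemH1 ((α - 1) / 2) h) :
    Integrable (fun p : ℝ × ℝ => |p.2| ^ (-α) *
      energyDensityDeriv α (pathAt (deriv γ) p.1 p.2) (pathAt (deriv h) p.1 p.2) 0) cylMeasure ∧
    HasDirDeriv (oharaER α) γ h (∫ p : ℝ × ℝ, |p.2| ^ (-α) *
      energyDensityDeriv α (pathAt (deriv γ) p.1 p.2) (pathAt (deriv h) p.1 p.2) 0
        ∂cylMeasure) := by
  have hα0 : 0 < α := by linarith [hα.1]
  obtain ⟨hpγ, hcγ, hgγ⟩ := hγ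
  obtain ⟨hph, hch, hgh⟩ := hh
  have hx := hcγ.continuous_deriv le_rfl
  have hy := hch.continuous_deriv le_rfl
  obtain ⟨M, hM0, hM⟩ := hph.deriv_periodic.exists_norm_le hy
  obtain ⟨c, hc0, hc⟩ := exists_normMean_lower_bound hcγ hpγ hinj harc
  obtain ⟨K, hK⟩ : ∃ K, K = 9 / 4 * (α * (c / 2) ^ (-α - 1) * 24) := ⟨_, rfl⟩
  obtain ⟨K', hK'⟩ : ∃ K', K' = 3 * M * (α * (c / 2) ^ (-α - 1) * 24) +
    α * (9 / 4) * ((α + 2) * (c / 2) ^ (-α - 3) * 24 * (3 / 2 * M) +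
      (c / 2) ^ (-α - 2) * (50 + 34 * M)) := ⟨_, rfl⟩
  set G : ℝ × ℝ → ℝ := fun p =>
    |p.2| ^ (-α) * meanSqOsc (pathAt (deriv γ) p.1 p.2) (pathAt (deriv h) p.1 p.2) with hG
  have hGi : Integrable G cylMeasure := integrable_meanSqOsc (by linarith [hα.1]) hx hy hgγ hgh
  set S : Set ℝ := {τ | |τ| < 1 ∧ |τ| * M < 1 / 10 ∧ |τ| * M < c / 2} with hS
  have hSn : S ∈ 𝓝 (0:ℝ) := by
    have h1 : Continuous fun τ : ℝ => |τ| := continuous_abs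
    have h2 : Continuous fun τ : ℝ => |τ| * M := by fun_prop
    have : IsOpen S := (isOpen_lt h1 continuous_const).inter
      ((isOpen_lt h2 continuous_const).inter (isOpen_lt h2 continuous_const))
    exact this.mem_nhds ⟨by norm_num, by norm_num, by simpa using hc0⟩
  have hlow : ∀ τ ∈ S, ∀ u w, |w| ≤ 1 / 2 →
      c / 2 ≤ normMean (pathAt (deriv γ) u w) (pathAt (deriv h) u w) τ := by
    intro τ hτ u w hw
    have h1 := hc u w hw
    have h2 : ‖∫ θ in (0:ℝ)..1, pathAt (deriv h) u w θ‖ ≤ M := by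
      simpa using intervalIntegral.norm_integral_le_of_norm_le_const (a := 0) (b := 1)
        (f := pathAt (deriv h) u w) fun θ _ => hM _
    have h3 := norm_sub_le_norm_add (∫ θ in (0:ℝ)..1, pathAt (deriv γ) u w θ)
      (τ • ∫ θ in (0:ℝ)..1, pathAt (deriv h) u w θ)
    rw [norm_smul, Real.norm_eq_abs] at h3
    have h4 := mul_le_mul_of_nonneg_left h2 (abs_nonneg τ)
    have h5 := hτ.2.2
    rw [normMean]
    linarith
  have hfm : ∀ τ, AEStronglyMeasurable (fun p : ℝ × ℝ => |p.2| ^ (-α) *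
      energyDensity α (pathAt (deriv γ) p.1 p.2) (pathAt (deriv h) p.1 p.2) τ) cylMeasure :=
    fun τ => ((measurable_abs_snd_rpow _).mul
      (measurable_energyDensity hx hy α τ)).aestronglyMeasurable
  have hfi : ∀ τ ∈ S, Integrable (fun p : ℝ × ℝ => |p.2| ^ (-α) *
      energyDensity α (pathAt (deriv γ) p.1 p.2) (pathAt (deriv h) p.1 p.2) τ) cylMeasure := by
    intro τ hτ
    refine (hGi.const_mul K).mono' (hfm τ) ?_
    filter_upwards [ae_cylMeasure] with p hp
    have := abs_energyDensity_le (continuous_pathAt hx p.1 p.2) (continuous_pathAt hy p.1 p.2)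
      (fun θ => harc _) (fun θ => hM _) (by linarith [hτ.2.1]) hα0 hτ.1.le (half_pos hc0)
      (hlow τ hτ p.1 p.2 hp.2.le)
    rw [norm_mul, Real.norm_eq_abs, Real.norm_eq_abs, abs_of_nonneg (by positivity), hG, hK]
    exact (mul_le_mul_of_nonneg_left this (by positivity)).trans_eq (by ring)
  have hei : ∀ τ ∈ S,
      Integrable (fun p : ℝ × ℝ => arcCorrection α (γ + τ • h) p.1 p.2) cylMeasure := by
    intro τ hτ
    refine (integrable_const (9 / 2 * (α * (1 / 4) ^ (-α - 1)) * (|τ| * M))).mono'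
      (measurable_arcCorrection hcγ hch α τ).aestronglyMeasurable ?_
    filter_upwards [ae_cylMeasure] with p hp
    exact (abs_arcCorrection_le hcγ hch hα0 harc hM hτ.2.1.le p.1 hp.2.le).1
  have h0S : (0:ℝ) ∈ S := mem_of_mem_nhds hSn
  have hD := hasDerivAt_integral_of_dominated_loc_of_deriv_le (μ := cylMeasure) (bound := fun p => K' * G p)
    (F := fun τ (p : ℝ × ℝ) => |p.2| ^ (-α) *
      energyDensity α (pathAt (deriv γ) p.1 p.2) (pathAt (deriv h) p.1 p.2) τ)
    (F' := fun τ (p : ℝ × ℝ) => |p.2| ^ (-α) *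
      energyDensityDeriv α (pathAt (deriv γ) p.1 p.2) (pathAt (deriv h) p.1 p.2) τ)
    hSn (Eventually.of_forall hfm) (hfi 0 h0S)
    ((measurable_abs_snd_rpow _).mul
      (measurable_energyDensityDeriv_zero hx hy harc α)).aestronglyMeasurable
    (by
      filter_upwards [ae_cylMeasure] with p hp τ hτ
      have := abs_energyDensityDeriv_le (continuous_pathAt hx p.1 p.2)
        (continuous_pathAt hy p.1 p.2)
        (fun θ => harc _) (fun θ => hM _) (by linarith [hτ.2.1]) hα0 hτ.1.le (half_pos hc0)
        (hlow τ hτ p.1 p.2 hp.2.le)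
      rw [← hK'] at this
      rw [norm_mul, Real.norm_eq_abs, Real.norm_eq_abs, abs_of_nonneg (by positivity), hG]
      exact (mul_le_mul_of_nonneg_left this (by positivity)).trans_eq (by ring))
    (hGi.const_mul K')
    (by
      filter_upwards [ae_cylMeasure] with p hp τ hτ
      exact (hasDerivAt_energyDensity (continuous_pathAt hx p.1 p.2)
        (continuous_pathAt hy p.1 p.2) (fun θ => harc _) (fun θ => hM _) α
        (by linarith [hτ.2.1])
        ((half_pos hc0).trans_le (hlow τ hτ p.1 p.2 hp.2.le))).const_mul _)
  refine ⟨hD.1, ?_⟩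
  have hE : ∀ τ ∈ S, oharaER α (γ + τ • h) = _ := fun τ hτ =>
    oharaER_perturb_eq hcγ hch hpγ hph hα0 (by
      filter_upwards [ae_cylMeasure] with p hp
      exact (half_pos hc0).trans_le (hlow τ hτ p.1 p.2 hp.2.le)) (hfi τ hτ) (hei τ hτ)
  have hE0 := hE 0 h0S
  have hz : ∫ p : ℝ × ℝ, arcCorrection α (γ + (0:ℝ) • h) p.1 p.2 ∂cylMeasure = 0 := by
    refine integral_eq_zero_of_ae ?_
    filter_upwards [ae_cylMeasure] with p hp
    exact (abs_arcCorrection_le hcγ hch hα0 harc hM (by norm_num) p.1 hp.2.le).2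
      (by simp; linarith [hp.2])
  rw [hz, zero_smul, add_zero, add_zero] at hE0
  have h1 := (hasDerivAt_iff_tendsto_slope.1 hD.2).add
    (tendsto_integral_arcCorrection_div hcγ hch hα0 harc hM)
  rw [add_zero] at h1
  refine h1.congr' ?_
  filter_upwards [mem_nhdsWithin_of_mem_nhds hSn] with τ hτ
  rw [hE τ hτ, hE0, slope_def_field]
  ring

end Variation

section Decomposition

variable {n : ℕ} {γ h : ℝ → Rn n} {α ε M c : ℝ}

theorem Function.Periodic.integral_Ioc_comp_add {f : ℝ → ℝ} (hf : Function.Periodic f 1) (a : ℝ) :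
    ∫ u in Ioc (0:ℝ) 1, f (u + a) = ∫ u in Ioc (0:ℝ) 1, f u := by
  rw [← intervalIntegral.integral_of_le zero_le_one, ← intervalIntegral.integral_of_le zero_le_one,
    intervalIntegral.integral_comp_add_right, zero_add, add_comm 1 a,
    hf.intervalIntegral_add_eq a 0, zero_add]

/-- The truncated interval `(-1/2,1/2) ∩ {ε ≤ |w|}`. -/
def truncSet (ε : ℝ) : Set ℝ := Ioo (-(1:ℝ)/2) (1/2) ∩ {w | ε ≤ |w|}

theorem Wset_ae_eq_truncSet (hε : 0 < ε) : Wset ε =ᵐ[volume] truncSet ε := by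
  have e : Wset ε = Icc (-(1:ℝ)/2) (1/2) ∩ {w | ε ≤ |w|} := by
    ext w
    simp only [Wset, mem_union, mem_Icc, mem_inter_iff, mem_ofPred_eq, le_abs]
    constructor
    · rintro (h | h)
      · exact ⟨⟨h.1, by linarith [h.2]⟩, Or.inr (by linarith [h.2])⟩
      · exact ⟨⟨by linarith [h.1], h.2⟩, Or.inl h.1⟩
    · rintro ⟨h, h' | h'⟩
      · exact Or.inr ⟨h', h.2⟩
      · exact Or.inl ⟨h.1, by linarith⟩
  rw [e, truncSet]
  exact Ioo_ae_eq_Icc.symm.inter (ae_eq_refl _)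

theorem measurableSet_truncSet (ε : ℝ) : MeasurableSet (truncSet ε) :=
  measurableSet_Ioo.inter (measurableSet_le measurable_const continuous_abs.measurable)

/-- Lebesgue measure on the truncated cylinder. -/
def truncMeasure (ε : ℝ) : Measure (ℝ × ℝ) :=
  (volume.restrict (Ioc (0:ℝ) 1)).prod (volume.restrict (truncSet ε))

theorem truncMeasure_eq (ε : ℝ) : truncMeasure ε = cylMeasure.restrict {p | ε ≤ |p.2|} := by
  have hm : MeasurableSet {p : ℝ × ℝ | ε ≤ |p.2|} :=
    measurableSet_le measurable_const (Continuous.measurable (by fun_prop))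
  rw [truncMeasure, cylMeasure, Measure.prod_restrict, Measure.prod_restrict,
    Measure.restrict_restrict hm]
  congr 1
  ext p
  simp only [truncSet, mem_prod, mem_inter_iff, mem_ofPred_eq]
  tauto

instance : IsFiniteMeasure (truncMeasure ε) := by
  rw [truncMeasure_eq]; infer_instance

theorem ae_truncMeasure : ∀ᵐ p ∂(truncMeasure ε), p.2 ≠ 0 ∧ |p.2| < 1 / 2 ∧ ε ≤ |p.2| := by
  have hm : MeasurableSet {p : ℝ × ℝ | ε ≤ |p.2|} :=
    measurableSet_le measurable_const (Continuous.measurable (by fun_prop))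
  rw [truncMeasure_eq]
  filter_upwards [ae_restrict_of_ae ae_cylMeasure, ae_restrict_mem hm] with p h1 h2
  exact ⟨h1.1, h1.2, h2⟩

theorem aecover_cylMeasure : AECover cylMeasure (𝓝[>] (0:ℝ)) fun ε => {p : ℝ × ℝ | ε ≤ |p.2|} where
  ae_eventually_mem := by
    filter_upwards [ae_cylMeasure] with p hp
    exact (eventually_le_nhds (abs_pos.2 hp.1)).filter_mono nhdsWithin_le_nhds
  measurableSet _ := measurableSet_le measurable_const (Continuous.measurable (by fun_prop))

/-- A function whose `u`-integral is odd in `w` has vanishing integral over the truncated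
cylinder. -/
theorem integral_truncMeasure_eq_zero_of_odd {J : ℝ → ℝ → ℝ}
    (hJ : Integrable (fun p : ℝ × ℝ => J p.1 p.2) (truncMeasure ε))
    (hodd : ∀ w, ∫ u in Ioc (0:ℝ) 1, J u (-w) = -∫ u in Ioc (0:ℝ) 1, J u w) :
    ∫ p : ℝ × ℝ, J p.1 p.2 ∂(truncMeasure ε) = 0 := by
  rw [truncMeasure, integral_prod_symm _ hJ, ← integral_indicator (measurableSet_truncSet ε)]
  set k : ℝ → ℝ := fun w => ∫ u in Ioc (0:ℝ) 1, J u w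
  have h1 := integral_neg_eq_self ((truncSet ε).indicator k) volume
  have h2 : ∀ w, (truncSet ε).indicator k (-w) = -(truncSet ε).indicator k w := fun w => by
    have hmem : -w ∈ truncSet ε ↔ w ∈ truncSet ε := by
      simp only [truncSet, mem_inter_iff, mem_Ioo, mem_ofPred_eq, abs_neg]
      refine and_congr_left fun _ => ⟨fun h => ⟨?_, ?_⟩, fun h => ⟨?_, ?_⟩⟩ <;> linarith [h.1, h.2]
    by_cases hw : w ∈ truncSet ε
    · rw [indicator_of_mem hw, indicator_of_mem (hmem.2 hw)]; exact hodd w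
    · rw [indicator_of_notMem hw, indicator_of_notMem (mt hmem.1 hw), neg_zero]
  simp only [h2, integral_neg] at h1
  linarith

/-- The part of the first variation whose integral over `u` is odd in `w`. -/
def fluxTerm (α : ℝ) (γ h : ℝ → Rn n) (u w : ℝ) : ℝ :=
  (⟪deriv γ (u + w), deriv h (u + w)⟫ - ⟪deriv γ u, deriv h u⟫) *
    (1 / ‖γ (u + w) - γ u‖ ^ α - 1 / |w| ^ α)

/-- Deviation of the mean of `⟪γ', h'⟫` over `[u,u+w]` from its value at `u`. -/
def meanTerm (α : ℝ) (γ h : ℝ → Rn n) (u w : ℝ) : ℝ :=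
  |w| ^ (-α) * ((∫ θ in (0:ℝ)..1, ⟪pathAt (deriv γ) u w θ, pathAt (deriv h) u w θ⟫) -
    ⟪deriv γ u, deriv h u⟫)

theorem integral_fluxTerm_neg (hpγ : Function.Periodic γ 1) (hph : Function.Periodic h 1)
    (α w : ℝ) :
    ∫ u in Ioc (0:ℝ) 1, fluxTerm α γ h u (-w) = -∫ u in Ioc (0:ℝ) 1, fluxTerm α γ h u w := by
  have hper : Function.Periodic (fun u => fluxTerm α γ h u w) 1 := fun u => by
    simp only [fluxTerm, hpγ u, hpγ.deriv_periodic u, hph.deriv_periodic u,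
      show u + 1 + w = u + w + 1 by ring, hpγ (u + w), hpγ.deriv_periodic (u + w),
      hph.deriv_periodic (u + w)]
  rw [← hper.integral_Ioc_comp_add (-w), ← integral_neg]
  refine integral_congr_ae (Eventually.of_forall fun u => ?_)
  simp only [fluxTerm, neg_add_cancel_right, abs_neg]
  rw [norm_sub_rev (γ u)]
  ring

theorem integral_meanTerm (hγ : ContDiff ℝ 1 γ) (hh : ContDiff ℝ 1 h)
    (hpγ : Function.Periodic γ 1) (hph : Function.Periodic h 1) (α w : ℝ) :
    ∫ u in Ioc (0:ℝ) 1, meanTerm α γ h u w = 0 := by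
  have hx := hγ.continuous_deriv le_rfl
  have hy := hh.continuous_deriv le_rfl
  set g : ℝ → ℝ := fun u => ⟪deriv γ u, deriv h u⟫ with hg
  have hgc : Continuous g := hx.inner hy
  have hgp : Function.Periodic g 1 := fun u => by
    simp only [hg, hpγ.deriv_periodic u, hph.deriv_periodic u]
  have hsw : ∫ u in Ioc (0:ℝ) 1, ∫ θ in Ioc (0:ℝ) 1, g (u + w * θ) =
      ∫ θ in Ioc (0:ℝ) 1, ∫ u in Ioc (0:ℝ) 1, g (u + w * θ) := by
    refine integral_integral_swap (f := fun u θ => g (u + w * θ)) ?_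
    rw [Measure.prod_restrict]
    have : Continuous (Function.uncurry fun u θ => g (u + w * θ)) := by
      simp only [Function.uncurry_def]; fun_prop
    exact (this.continuousOn.integrableOn_compact
      (isCompact_Icc.prod isCompact_Icc)).mono_set
        (prod_mono Ioc_subset_Icc_self Ioc_subset_Icc_self)
  have hc1 : Continuous fun u => ∫ θ in (0:ℝ)..1, g (u + w * θ) :=
    intervalIntegral.continuous_parametric_intervalIntegral_of_continuous'
      (by simp only [Function.uncurry_def]; fun_prop) 0 1
  have ii : ∀ f : ℝ → ℝ, Continuous f → IntegrableOn f (Ioc 0 1) := fun f hf =>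
    (hf.continuousOn.integrableOn_compact isCompact_Icc).mono_set Ioc_subset_Icc_self
  change ∫ u in Ioc (0:ℝ) 1, |w| ^ (-α) * ((∫ θ in (0:ℝ)..1, g (u + w * θ)) - g u) = 0
  rw [integral_const_mul, integral_sub (ii _ hc1) (ii _ hgc)]
  simp only [intervalIntegral.integral_of_le (zero_le_one (α := ℝ))]
  rw [hsw]
  simp only [hgp.integral_Ioc_comp_add]
  simp

theorem integrable_fluxTerm (hγ : ContDiff ℝ 1 γ) (hh : ContDiff ℝ 1 h) (hα : 0 < α) (hε : 0 < ε)
    (hc0 : 0 < c) (hc : ∀ u w : ℝ, |w| ≤ 1 / 2 → c ≤ ‖∫ θ in (0:ℝ)..1, pathAt (deriv γ) u w θ‖)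
    (hM : ∀ u, |⟪deriv γ u, deriv h u⟫| ≤ M) :
    Integrable (fun p : ℝ × ℝ => fluxTerm α γ h p.1 p.2) (truncMeasure ε) := by
  have hx := hγ.continuous_deriv le_rfl
  have hy := hh.continuous_deriv le_rfl
  have hγc := hγ.continuous
  have hm : Measurable fun p : ℝ × ℝ => fluxTerm α γ h p.1 p.2 := by
    have h1 : Measurable fun p : ℝ × ℝ =>
        ⟪deriv γ (p.1 + p.2), deriv h (p.1 + p.2)⟫ - ⟪deriv γ p.1, deriv h p.1⟫ :=
      Continuous.measurable (by fun_prop)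
    have h2 : Measurable fun p : ℝ × ℝ => ‖γ (p.1 + p.2) - γ p.1‖ :=
      Continuous.measurable (by fun_prop)
    exact h1.mul (((h2.pow_const α).const_div 1).sub ((measurable_abs_snd_rpow α).const_div 1))
  refine Integrable.of_bound hm.aestronglyMeasurable
    ((M + M) * (1 / (ε * c) ^ α + 1 / ε ^ α)) ?_
  filter_upwards [ae_truncMeasure] with p ⟨_, hp1, hp2⟩
  have hM0 : 0 ≤ M := (abs_nonneg _).trans (hM 0)
  have hb : ε * c ≤ ‖γ (p.1 + p.2) - γ p.1‖ := by
    rw [sub_eq_smul_integral_pathAt hγ, norm_smul, Real.norm_eq_abs]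
    exact mul_le_mul hp2 (hc _ _ hp1.le) hc0.le (abs_nonneg _)
  have h1 : 1 / ‖γ (p.1 + p.2) - γ p.1‖ ^ α ≤ 1 / (ε * c) ^ α :=
    one_div_le_one_div_of_le (by positivity) (Real.rpow_le_rpow (by positivity) hb hα.le)
  have h2 : 1 / |p.2| ^ α ≤ 1 / ε ^ α :=
    one_div_le_one_div_of_le (by positivity) (Real.rpow_le_rpow hε.le hp2 hα.le)
  have h1' : 0 ≤ 1 / ‖γ (p.1 + p.2) - γ p.1‖ ^ α := by positivity
  have h2' : 0 ≤ 1 / |p.2| ^ α := by positivity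
  rw [fluxTerm, norm_mul, Real.norm_eq_abs, Real.norm_eq_abs]
  refine mul_le_mul ((abs_sub _ _).trans (add_le_add (hM _) (hM _))) ?_ (abs_nonneg _) (by positivity)
  rw [abs_le]
  constructor <;> linarith

theorem integrable_meanTerm (hγ : ContDiff ℝ 1 γ) (hh : ContDiff ℝ 1 h) (hα : 0 < α) (hε : 0 < ε)
    (hM : ∀ u, |⟪deriv γ u, deriv h u⟫| ≤ M) :
    Integrable (fun p : ℝ × ℝ => meanTerm α γ h p.1 p.2) (truncMeasure ε) := by
  have hx := hγ.continuous_deriv le_rfl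
  have hy := hh.continuous_deriv le_rfl
  have hm : Measurable fun p : ℝ × ℝ => meanTerm α γ h p.1 p.2 :=
    (measurable_abs_snd_rpow (-α)).mul ((continuous_integral_inner_pathAt hx hy).measurable.sub
      (Continuous.measurable (by fun_prop)))
  refine Integrable.of_bound hm.aestronglyMeasurable (ε ^ (-α) * (M + M)) ?_
  filter_upwards [ae_truncMeasure] with p ⟨_, hp1, hp2⟩
  rw [meanTerm, norm_mul, Real.norm_eq_abs, Real.norm_eq_abs, abs_of_nonneg (by positivity)]
  have h1 : |∫ θ in (0:ℝ)..1, ⟪pathAt (deriv γ) p.1 p.2 θ, pathAt (deriv h) p.1 p.2 θ⟫| ≤ M := by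
    simpa using intervalIntegral.norm_integral_le_of_norm_le_const (a := 0) (b := 1)
      (f := fun θ => ⟪pathAt (deriv γ) p.1 p.2 θ, pathAt (deriv h) p.1 p.2 θ⟫) fun θ _ => hM _
  exact mul_le_mul (Real.rpow_le_rpow_of_nonpos hε hp2 (by linarith))
    ((abs_sub _ _).trans (add_le_add h1 (hM _))) (abs_nonneg _) (by positivity)

theorem Rintegrand_eq (hγ : ContDiff ℝ 1 γ) (hh : ContDiff ℝ 1 h) (α u : ℝ) {w : ℝ} (hw : w ≠ 0) :
    Rintegrand α γ h u w = |w| ^ (-α) *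
      (2 * ⟪deriv γ u, deriv h u⟫ * (‖∫ θ in (0:ℝ)..1, pathAt (deriv γ) u w θ‖ ^ (-α) - 1) -
        α * ⟪∫ θ in (0:ℝ)..1, pathAt (deriv γ) u w θ, ∫ θ in (0:ℝ)..1, pathAt (deriv h) u w θ⟫ *
          (‖∫ θ in (0:ℝ)..1, pathAt (deriv γ) u w θ‖ ^ (-α - 2) - 1)) := by
  have hw' := abs_pos.2 hw
  rw [Rintegrand, sub_eq_smul_integral_pathAt hγ, sub_eq_smul_integral_pathAt hh, norm_smul,
    Real.norm_eq_abs, real_inner_smul_left, real_inner_smul_right,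
    Real.mul_rpow (abs_nonneg _) (norm_nonneg _), Real.mul_rpow (abs_nonneg _) (norm_nonneg _),
    show -α - 2 = -(α + 2) by ring, Real.rpow_neg (norm_nonneg _), Real.rpow_neg (norm_nonneg _),
    Real.rpow_neg (abs_nonneg _), Real.rpow_add hw', Real.rpow_two, sq_abs]
  have : |w| ^ α ≠ 0 := by positivity
  simp only [one_div, mul_inv]
  field_simp

theorem Qintegrand_eq (hγ : ContDiff ℝ 1 γ) (hh : ContDiff ℝ 1 h) (α u : ℝ) {w : ℝ} (hw : w ≠ 0) :
    Qintegrand α γ h u w = |w| ^ (-α) * (⟪deriv γ u, deriv h u⟫ -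
      ⟪∫ θ in (0:ℝ)..1, pathAt (deriv γ) u w θ, ∫ θ in (0:ℝ)..1, pathAt (deriv h) u w θ⟫) := by
  have hw' := abs_pos.2 hw
  rw [Qintegrand, sub_eq_smul_integral_pathAt hγ, sub_eq_smul_integral_pathAt hh,
    real_inner_smul_left, real_inner_smul_right,
    Real.rpow_neg (abs_nonneg _), Real.rpow_add hw', Real.rpow_two, sq_abs]
  have : |w| ^ α ≠ 0 := by positivity
  field_simp

/-- Pointwise decomposition of the first variation. -/
theorem energyDensityDeriv_zero_eq (hγ : ContDiff ℝ 1 γ) (hh : ContDiff ℝ 1 h)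
    (harc : ArcLengthParam γ) (α u : ℝ) {w : ℝ} (hw : w ≠ 0) :
    |w| ^ (-α) * energyDensityDeriv α (pathAt (deriv γ) u w) (pathAt (deriv h) u w) 0 =
      Rintegrand α γ h u w + α * Qintegrand α γ h u w + fluxTerm α γ h u w +
        α * meanTerm α γ h u w := by
  rw [energyDensityDeriv_zero (x := pathAt (deriv γ) u w) (fun θ => harc _), Rintegrand_eq hγ hh α u hw,
    Qintegrand_eq hγ hh α u hw, fluxTerm, meanTerm, sub_eq_smul_integral_pathAt hγ, norm_smul,
    Real.norm_eq_abs, Real.mul_rpow (abs_nonneg _) (norm_nonneg _), one_div, one_div, mul_inv,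
    ← Real.rpow_neg (abs_nonneg _), ← Real.rpow_neg (norm_nonneg _)]
  simp only [pathAt, mul_one, mul_zero, add_zero]
  ring

theorem integrable_Rintegrand (hα : 1 ≤ α) (hγ : MemH1 ((α - 1) / 2) γ)
    (harc : ArcLengthParam γ) (hh : MemH1 ((α - 1) / 2) h) (hc0 : 0 < c)
    (hc : ∀ u w : ℝ, |w| ≤ 1 / 2 → c ≤ ‖∫ θ in (0:ℝ)..1, pathAt (deriv γ) u w θ‖)
    (hM : ∀ u, ‖deriv h u‖ ≤ M) :
    Integrable (fun p : ℝ × ℝ => Rintegrand α γ h p.1 p.2) cylMeasure := by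
  obtain ⟨hpγ, hcγ, hgγ⟩ := hγ
  obtain ⟨hph, hch, hgh⟩ := hh
  have hx := hcγ.continuous_deriv le_rfl
  have hy := hch.continuous_deriv le_rfl
  have hγc := hcγ.continuous
  have hhc := hch.continuous
  have hM0 : 0 ≤ M := (norm_nonneg _).trans (hM 0)
  have hm : Measurable fun p : ℝ × ℝ => Rintegrand α γ h p.1 p.2 := by
    have h1 : Measurable fun p : ℝ × ℝ => 2 * ⟪deriv γ p.1, deriv h p.1⟫ :=
      Continuous.measurable (by fun_prop)
    have h2 : Measurable fun p : ℝ × ℝ =>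
        α * ⟪γ (p.1 + p.2) - γ p.1, h (p.1 + p.2) - h p.1⟫ :=
      Continuous.measurable (by fun_prop)
    have h3 : Measurable fun p : ℝ × ℝ => ‖γ (p.1 + p.2) - γ p.1‖ :=
      Continuous.measurable (by fun_prop)
    have h4 : ∀ s : ℝ, Measurable fun p : ℝ × ℝ => 1 / ‖γ (p.1 + p.2) - γ p.1‖ ^ s - 1 / |p.2| ^ s :=
      fun s => ((h3.pow_const s).const_div 1).sub ((measurable_abs_snd_rpow s).const_div 1)
    exact (h1.mul (h4 α)).sub (h2.mul (h4 (α + 2)))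
  set m := min c 1 with hmdef
  have hm0 : 0 < m := lt_min hc0 one_pos
  set K := 2 * M * (α * m ^ (-α - 1) * 24) + α * M * ((α + 2) * m ^ (-(α + 2) - 1) * 24) with hK
  refine ((integrable_meanSqOsc hα hx hy hgγ hgh).const_mul K).mono' hm.aestronglyMeasurable ?_
  filter_upwards [ae_cylMeasure] with p hp
  rw [Rintegrand_eq hcγ hch α p.1 hp.1, norm_mul, Real.norm_eq_abs, Real.norm_eq_abs,
    abs_of_nonneg (by positivity), mul_left_comm]
  refine mul_le_mul_of_nonneg_left ?_ (by positivity)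
  have hosc := meanSpeed_sub_normMean_le (τ := 0) (continuous_pathAt hx p.1 p.2)
    (continuous_pathAt hy p.1 p.2) (fun θ => harc _) (fun θ => hM _) (by norm_num) (by norm_num)
  have hle := normMean_le_meanSpeed (τ := 0) (continuous_pathAt hx p.1 p.2)
    (continuous_pathAt hy p.1 p.2)
  have hone : meanSpeed (pathAt (deriv γ) p.1 p.2) (pathAt (deriv h) p.1 p.2) 0 = 1 := by
    simp only [meanSpeed, zero_smul, add_zero, pathAt, harc _]; simp
  simp only [hone, normMean, zero_smul, add_zero] at hosc hle
  have hlow := hc p.1 p.2 hp.2.le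
  have hv2 : ‖∫ θ in (0:ℝ)..1, pathAt (deriv h) p.1 p.2 θ‖ ≤ M := by
    simpa using intervalIntegral.norm_integral_le_of_norm_le_const (a := 0) (b := 1)
      (f := pathAt (deriv h) p.1 p.2) fun θ _ => hM _
  set v := ∫ θ in (0:ℝ)..1, pathAt (deriv γ) p.1 p.2 θ
  set k := ∫ θ in (0:ℝ)..1, pathAt (deriv h) p.1 p.2 θ
  set W := meanSqOsc (pathAt (deriv γ) p.1 p.2) (pathAt (deriv h) p.1 p.2)
  have hg : |⟪deriv γ p.1, deriv h p.1⟫| ≤ M := by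
    refine (abs_real_inner_le_norm _ _).trans ?_
    rw [harc, one_mul]; exact hM _
  have hq : |⟪v, k⟫| ≤ M :=
    (abs_real_inner_le_norm _ _).trans ((mul_le_mul hle hv2 (norm_nonneg _) zero_le_one).trans_eq
      (one_mul M))
  have hpow : ∀ s : ℝ, 0 < s → |‖v‖ ^ (-s) - 1| ≤ s * m ^ (-s - 1) * 24 * W := fun s hs => by
    have h1 := rpow_neg_lipschitz hs hm0 ((min_le_left c 1).trans hlow) (min_le_right c 1)
    rw [Real.one_rpow, abs_sub_comm ‖v‖ 1, abs_of_nonneg (sub_nonneg.2 hle)] at h1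
    refine h1.trans ((mul_le_mul_of_nonneg_left hosc (by positivity)).trans_eq (by ring))
  have hα0 : 0 < α := by linarith
  have e1 := hpow α hα0
  have e2 := hpow (α + 2) (by linarith)
  rw [show -α - 2 = -(α + 2) by ring]
  refine (abs_sub _ _).trans ?_
  rw [abs_mul, abs_mul, abs_mul, abs_mul, abs_of_pos hα0, abs_two]
  calc _ ≤ 2 * M * (α * m ^ (-α - 1) * 24 * W) +
        α * M * ((α + 2) * m ^ (-(α + 2) - 1) * 24 * W) := by gcongr
    _ = K * W := by rw [hK]; ring

theorem cylinder_ae_eq : (Ioc (0:ℝ) 1 ×ˢ Icc (-(1:ℝ)/2) (1/2) : Set (ℝ × ℝ)) =ᵐ[volume]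
    (Ioc (0:ℝ) 1 ×ˢ Ioo (-(1:ℝ)/2) (1/2) : Set (ℝ × ℝ)) :=
  Measure.set_prod_ae_eq (ae_eq_refl _) Ioo_ae_eq_Icc.symm

/-- On the truncated cylinder the exact first variation, the remainder and the principal part
balance. -/
theorem mul_integral_Qintegrand (hγ : ContDiff ℝ 1 γ) (hh : ContDiff ℝ 1 h)
    (hpγ : Function.Periodic γ 1) (hph : Function.Periodic h 1) (harc : ArcLengthParam γ)
    (hα : 0 < α) (hε : 0 < ε)
    (hc0 : 0 < c) (hc : ∀ u w : ℝ, |w| ≤ 1 / 2 → c ≤ ‖∫ θ in (0:ℝ)..1, pathAt (deriv γ) u w θ‖)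
    (hM : ∀ u, |⟪deriv γ u, deriv h u⟫| ≤ M)
    (hD : Integrable (fun p : ℝ × ℝ => |p.2| ^ (-α) *
      energyDensityDeriv α (pathAt (deriv γ) p.1 p.2) (pathAt (deriv h) p.1 p.2) 0) cylMeasure)
    (hR : Integrable (fun p : ℝ × ℝ => Rintegrand α γ h p.1 p.2) cylMeasure) :
    ∫ u in Ioc (0:ℝ) 1, ∫ w in Wset ε, Qintegrand α γ h u w =
      ((∫ p in {p : ℝ × ℝ | ε ≤ |p.2|}, |p.2| ^ (-α) * energyDensityDeriv α
          (pathAt (deriv γ) p.1 p.2) (pathAt (deriv h) p.1 p.2) 0 ∂cylMeasure) -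
        ∫ p in {p : ℝ × ℝ | ε ≤ |p.2|}, Rintegrand α γ h p.1 p.2 ∂cylMeasure) / α := by
  have hD' := hD.mono_measure (Measure.restrict_le_self (s := {p : ℝ × ℝ | ε ≤ |p.2|}))
  have hR' := hR.mono_measure (Measure.restrict_le_self (s := {p : ℝ × ℝ | ε ≤ |p.2|}))
  rw [← truncMeasure_eq] at hD' hR' ⊢
  have hF := integrable_fluxTerm (ε := ε) hγ hh hα hε hc0 hc hM
  have hN := integrable_meanTerm (ε := ε) hγ hh hα hε hM
  have hF0 := integral_truncMeasure_eq_zero_of_odd hF (integral_fluxTerm_neg hpγ hph α)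
  have hN0 := integral_truncMeasure_eq_zero_of_odd hN fun w => by
    rw [integral_meanTerm hγ hh hpγ hph, integral_meanTerm hγ hh hpγ hph, neg_zero]
  have hae : (fun p : ℝ × ℝ => Qintegrand α γ h p.1 p.2) =ᵐ[truncMeasure ε] fun p =>
      (|p.2| ^ (-α) * energyDensityDeriv α (pathAt (deriv γ) p.1 p.2)
        (pathAt (deriv h) p.1 p.2) 0 - Rintegrand α γ h p.1 p.2 - fluxTerm α γ h p.1 p.2) / α -
        meanTerm α γ h p.1 p.2 := by
    filter_upwards [ae_truncMeasure] with p hp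
    rw [energyDensityDeriv_zero_eq hγ hh harc α p.1 hp.1]
    field_simp
    ring
  have hQ : Integrable (fun p : ℝ × ℝ => Qintegrand α γ h p.1 p.2) (truncMeasure ε) :=
    ((((hD'.sub hR').sub hF).div_const α).sub hN).congr hae.symm
  have e : ∀ u, ∫ w in Wset ε, Qintegrand α γ h u w = ∫ w in truncSet ε, Qintegrand α γ h u w :=
    fun u => setIntegral_congr_set (Wset_ae_eq_truncSet hε)
  simp only [e]
  have hfub : ∫ u in Ioc (0:ℝ) 1, ∫ w in truncSet ε, Qintegrand α γ h u w =
      ∫ p : ℝ × ℝ, Qintegrand α γ h p.1 p.2 ∂(truncMeasure ε) :=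
    (integral_prod (fun p : ℝ × ℝ => Qintegrand α γ h p.1 p.2) hQ).symm
  rw [hfub, integral_congr_ae hae]
  have s1 := integral_sub (((hD'.sub hR').sub hF).div_const α) hN
  have s2 := integral_sub (hD'.sub hR') hF
  have s3 := integral_sub hD' hR'
  simp only [Pi.sub_apply] at s1 s2 s3
  rw [s1, integral_div, s2, s3, hF0, hN0, sub_zero, sub_zero]

end Decomposition

/-- For an injective arc-length curve `γ ∈ H^{(1+α)/2,2}` and a direction
`h ∈ H^{(1+α)/2,2}`: the double integral defining `R(γ,h)` converges absolutely, the
principal value `Q(γ,h)` exists, and `δE^α(γ;h) = α·Q(γ,h) + R(γ,h)`. -/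
theorem statement10 {n : ℕ} (hn : 2 ≤ n) {α : ℝ} (hα : α ∈ Ioo (2:ℝ) 3)
    {γ : ℝ → Rn n} (hγ : MemH1 ((α - 1) / 2) γ) (hinj : PerInjective γ)
    (harc : ArcLengthParam γ) {h : ℝ → Rn n} (hh : MemH1 ((α - 1) / 2) h) :
    IntegrableOn (fun p : ℝ × ℝ => Rintegrand α γ h p.1 p.2)
      ((Ioc (0:ℝ) 1) ×ˢ (Icc (-(1:ℝ)/2) (1/2))) volume ∧
    ∃ Qv : ℝ,
      Tendsto (fun ε : ℝ => ∫ u in Ioc (0:ℝ) 1, ∫ w in Wset ε, Qintegrand α γ h u w)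
        (𝓝[>] (0:ℝ)) (𝓝 Qv) ∧
      HasDirDeriv (oharaER α) γ h (α * Qv + Rval α γ h) := by
  have hα0 : 0 < α := by linarith [hα.1]
  obtain ⟨c, hc0, hc⟩ := exists_normMean_lower_bound hγ.2.1 hγ.1 hinj harc
  obtain ⟨M, -, hM⟩ := hh.1.deriv_periodic.exists_norm_le (hh.2.1.continuous_deriv le_rfl)
  have hg : ∀ u, |⟪deriv γ u, deriv h u⟫| ≤ M := fun u => by
    refine (abs_real_inner_le_norm _ _).trans ?_
    rw [harc, one_mul]
    exact hM u
  have hR := integrable_Rintegrand (by linarith [hα.1]) hγ harc hh hc0 hc hM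
  obtain ⟨hD, hdir⟩ := hasDirDeriv_oharaER hα hγ hinj harc hh
  have hRval : Rval α γ h = ∫ p : ℝ × ℝ, Rintegrand α γ h p.1 p.2 ∂cylMeasure := by
    rw [Rval, cylMeasure_eq, setIntegral_congr_set cylinder_ae_eq]
  refine ⟨?_, ((∫ p : ℝ × ℝ, |p.2| ^ (-α) * energyDensityDeriv α (pathAt (deriv γ) p.1 p.2)
    (pathAt (deriv h) p.1 p.2) 0 ∂cylMeasure) - Rval α γ h) / α, ?_, ?_⟩
  · refine IntegrableOn.congr_set_ae ?_ cylinder_ae_eq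
    rwa [IntegrableOn, ← cylMeasure_eq]
  · rw [hRval]
    refine (((aecover_cylMeasure.integral_tendsto_of_countably_generated hD).sub
      (aecover_cylMeasure.integral_tendsto_of_countably_generated hR)).div_const α).congr' ?_
    filter_upwards [self_mem_nhdsWithin] with ε hε
    exact (mul_integral_Qintegrand hγ.2.1 hh.2.1 hγ.1 hh.1 harc hα0 hε hc0 hc hg hD hR).symm
  · rwa [mul_div_cancel₀ _ hα0.ne', sub_add_cancel]

end
end

section
/- Let α ∈ (2,3) and n ≥ 2. There exists a sequence of real numbers (q_k)_{k∈ℤ} converging to a positive constant as |k| → ∞ such that for all γ, h ∈ H^{(α+1)/2,2}(ℝ/ℤ,ℝⁿ) the principal value Q(γ,h) exists, the series Σ_{k∈ℤ} q_k·|k|^{α+1}·⟨γ̂(k), ĥ(k)⟩_{ℂⁿ} converges absolutely, and Q(γ,h) = Σ_{k∈ℤ} q_k·|k|^{α+1}·⟨γ̂(k), ĥ(k)⟩_{ℂⁿ}. -/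
open MeasureTheory Filter Set
open scoped RealInnerProductSpace ENNReal Topology

noncomputable section

variable {n : ℕ}

/-- The `k`-th Fourier coefficient of a scalar 1-periodic function. -/
def scalarCoef (f : ℝ → ℂ) (k : ℤ) : ℂ :=
  ∫ u in (0:ℝ)..1, f u * Complex.exp ((-2) * (Real.pi : ℂ) * Complex.I * (k : ℂ) * (u : ℂ))

lemma fourierCoeff_lift_eq_scalarCoef {f : ℝ → ℂ} (hf : Function.Periodic f 1) (k : ℤ) :
    fourierCoeff (T := 1) hf.lift k = scalarCoef f k := by
  rw [fourierCoeff_eq_intervalIntegral _ _ 0, scalarCoef]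
  simp only [zero_add, div_one, one_smul]
  refine intervalIntegral.integral_congr fun u _ => ?_
  simp only [Function.Periodic.lift_coe, fourier_coe_apply, smul_eq_mul]
  rw [mul_comm]
  congr 2
  push_cast
  ring

lemma continuous_periodic_lift {E : Type*} [TopologicalSpace E] {f : ℝ → E}
    (hf : Function.Periodic f 1) (hc : Continuous f) :
    Continuous (hf.lift : AddCircle (1:ℝ) → E) :=
  continuous_coinduced_dom.mpr hc

/-- Parseval's identity for continuous 1-periodic functions. -/
lemma hasSum_scalarCoef_mul_star {f g : ℝ → ℂ} (hf : Function.Periodic f 1)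
    (hg : Function.Periodic g 1) (hfc : Continuous f) (hgc : Continuous g) :
    HasSum (fun k : ℤ => scalarCoef f k * star (scalarCoef g k))
      (∫ u in (0:ℝ)..1, f u * star (g u)) := by
  let F : C(AddCircle (1:ℝ), ℂ) := ⟨hf.lift, continuous_periodic_lift hf hfc⟩
  let G : C(AddCircle (1:ℝ), ℂ) := ⟨hg.lift, continuous_periodic_lift hg hgc⟩
  have key := (fourierBasis (T := (1:ℝ))).hasSum_inner_mul_inner
    (ContinuousMap.toLp (E := ℂ) 2 AddCircle.haarAddCircle ℂ G)
    (ContinuousMap.toLp (E := ℂ) 2 AddCircle.haarAddCircle ℂ F)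
  convert! key using 1
  · funext k
    rw [← inner_conj_symm _ (fourierBasis k), ← HilbertBasis.repr_apply_apply,
      ← HilbertBasis.repr_apply_apply, fourierBasis_repr, fourierBasis_repr, fourierCoeff_toLp,
      fourierCoeff_toLp]
    change _ = (starRingEnd ℂ) (fourierCoeff (T := 1) hg.lift k) * fourierCoeff (T := 1) hf.lift k
    rw [fourierCoeff_lift_eq_scalarCoef, fourierCoeff_lift_eq_scalarCoef, mul_comm]
    rfl
  · rw [MeasureTheory.ContinuousMap.inner_toLp, AddCircle.integral_haarAddCircle,
      ← AddCircle.intervalIntegral_preimage 1 0]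
    simp only [zero_add, inv_one, one_smul]
    rfl

lemma scalarCoef_translate {f : ℝ → ℂ} (hf : Function.Periodic f 1) (w : ℝ) (k : ℤ) :
    scalarCoef (fun u => f (u + w)) k =
      Complex.exp (2 * Real.pi * Complex.I * k * w) * scalarCoef f k := by
  have hexp : Function.Periodic (fun u : ℝ => f u *
      Complex.exp ((-2) * (Real.pi : ℂ) * Complex.I * (k : ℂ) * (u : ℂ))) 1 := by
    intro u
    simp only [hf u]
    congr 1
    rw [Complex.exp_eq_exp_iff_exists_int]
    exact ⟨-k, by push_cast; ring⟩
  rw [scalarCoef, scalarCoef, ← zero_add (1:ℝ), ← hexp.intervalIntegral_add_eq w 0,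
    ← intervalIntegral.integral_const_mul, add_comm w, zero_add]
  rw [show (∫ x in w..(1 + w), Complex.exp (2 * Real.pi * Complex.I * k * w) * (f x *
      Complex.exp ((-2) * (Real.pi : ℂ) * Complex.I * (k : ℂ) * (x : ℂ)))) =
      ∫ x in (0 + w)..(1 + w), Complex.exp (2 * Real.pi * Complex.I * k * w) * (f x *
      Complex.exp ((-2) * (Real.pi : ℂ) * Complex.I * (k : ℂ) * (x : ℂ))) by rw [zero_add]]
  rw [← intervalIntegral.integral_comp_add_right (fun x : ℝ =>
    Complex.exp (2 * Real.pi * Complex.I * k * w) * (f x *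
      Complex.exp ((-2) * (Real.pi : ℂ) * Complex.I * (k : ℂ) * (x : ℂ))))]
  refine intervalIntegral.integral_congr fun u _ => ?_
  rw [mul_left_comm, ← Complex.exp_add]
  congr 2
  push_cast
  ring

lemma scalarCoef_sub {f g : ℝ → ℂ} (hf : Continuous f) (hg : Continuous g) (k : ℤ) :
    scalarCoef (fun u => f u - g u) k = scalarCoef f k - scalarCoef g k := by
  simp only [scalarCoef, sub_mul]
  exact intervalIntegral.integral_sub (Continuous.intervalIntegrable (by fun_prop) _ _)
    (Continuous.intervalIntegrable (by fun_prop) _ _)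

lemma scalarCoef_deriv {f f' : ℝ → ℂ} (hf : Function.Periodic f 1)
    (hd : ∀ u, HasDerivAt f (f' u) u) (hc : Continuous f') (k : ℤ) :
    scalarCoef f' k = 2 * Real.pi * Complex.I * k * scalarCoef f k := by
  have he : ∀ u : ℝ, HasDerivAt
      (fun u : ℝ => Complex.exp ((-2) * (Real.pi : ℂ) * Complex.I * (k : ℂ) * (u : ℂ)))
      (Complex.exp ((-2) * (Real.pi : ℂ) * Complex.I * (k : ℂ) * (u : ℂ)) *
        ((-2) * (Real.pi : ℂ) * Complex.I * (k : ℂ))) u := by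
    intro u
    refine HasDerivAt.cexp ?_
    simpa using (Complex.ofRealCLM.hasDerivAt (x := u)).const_mul
      ((-2) * (Real.pi : ℂ) * Complex.I * (k : ℂ))
  have h := intervalIntegral.integral_mul_deriv_eq_deriv_mul (a := 0) (b := 1)
    (fun u _ => hd u) (fun u _ => he u) (hc.intervalIntegrable _ _)
    (Continuous.intervalIntegrable (by fun_prop) _ _)
  have h1 : Complex.exp ((-2) * (Real.pi : ℂ) * Complex.I * (k : ℂ) * ((1:ℝ) : ℂ)) = 1 := by
    rw [Complex.exp_eq_one_iff]
    exact ⟨-k, by push_cast; ring⟩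
  have h0 : f 1 = f 0 := by simpa using hf 0
  rw [h1, h0] at h
  simp only [Complex.ofReal_zero, mul_zero, Complex.exp_zero, sub_self, zero_sub] at h
  rw [scalarCoef, ← neg_eq_iff_eq_neg.mpr h, scalarCoef, ← intervalIntegral.integral_const_mul,
    ← intervalIntegral.integral_neg]
  refine intervalIntegral.integral_congr fun u _ => ?_
  ring

/-- The Hermitian product of the `k`-th Fourier coefficients of two curves. -/
def coefInner (γ h : ℝ → Rn n) (k : ℤ) : ℂ := ∑ j, fCoef γ k j * star (fCoef h k j)

lemma Function.Periodic.deriv_one {f : ℝ → Rn n} (hf : Function.Periodic f 1) :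
    Function.Periodic (deriv f) 1 := by
  intro u
  rw [← deriv_comp_add_const, show (fun x => f (x + 1)) = f from funext hf]

/-- Parseval's identity for continuous 1-periodic curves. -/
lemma hasSum_coefInner {F G : ℝ → Rn n} (hF : Function.Periodic F 1) (hG : Function.Periodic G 1)
    (hFc : Continuous F) (hGc : Continuous G) :
    HasSum (coefInner F G) ((∫ u in Ioc (0:ℝ) 1, ⟪F u, G u⟫ : ℝ) : ℂ) := by
  have key : HasSum (coefInner F G) (∑ j, ∫ u in (0:ℝ)..1, (F u j : ℂ) * star (G u j : ℂ)) :=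
    hasSum_sum fun j _ => hasSum_scalarCoef_mul_star (f := fun u => (F u j : ℂ))
      (g := fun u => (G u j : ℂ)) (fun u => by simp only [hF u]) (fun u => by simp only [hG u])
      (by fun_prop) (by fun_prop)
  convert key using 1
  rw [← intervalIntegral.integral_of_le zero_le_one, ← intervalIntegral.integral_finsetSum
    fun j _ => Continuous.intervalIntegrable (by fun_prop) _ _, ← intervalIntegral.integral_ofReal]
  refine intervalIntegral.integral_congr fun u _ => ?_
  simp [PiLp.inner_apply, mul_comm]

lemma fCoef_deriv {γ : ℝ → Rn n} (hp : Function.Periodic γ 1) (hγ : ContDiff ℝ 1 γ) (k : ℤ)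
    (j : Fin n) : fCoef (deriv γ) k j = 2 * Real.pi * Complex.I * k * fCoef γ k j := by
  have hc : Continuous (deriv γ) := hγ.continuous_deriv le_rfl
  refine scalarCoef_deriv (f := fun u => (γ u j : ℂ)) (f' := fun u => (deriv γ u j : ℂ))
    (fun u => by simp only [hp u]) (fun u => ?_) (by fun_prop) k
  have h := (hγ.differentiable one_ne_zero u).hasDerivAt
  exact ((EuclideanSpace.proj (𝕜 := ℝ) j).hasFDerivAt.comp_hasDerivAt u h).ofReal_comp

lemma fCoef_translate_sub {γ : ℝ → Rn n} (hp : Function.Periodic γ 1) (hγ : Continuous γ) (w : ℝ)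
    (k : ℤ) (j : Fin n) : fCoef (fun u => γ (u + w) - γ u) k j =
      (Complex.exp (2 * Real.pi * Complex.I * k * w) - 1) * fCoef γ k j := by
  have h := scalarCoef_sub (f := fun u => (γ (u + w) j : ℂ)) (g := fun u => (γ u j : ℂ))
    (by fun_prop) (by fun_prop) k
  rw [scalarCoef_translate (f := fun u => (γ u j : ℂ)) (fun u => by simp only [hp u])] at h
  rw [sub_mul, one_mul]
  refine Eq.trans ?_ h
  simp [fCoef, scalarCoef]

lemma coefInner_deriv {γ h : ℝ → Rn n} (hγp : Function.Periodic γ 1) (hhp : Function.Periodic h 1)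
    (hγ : ContDiff ℝ 1 γ) (hh : ContDiff ℝ 1 h) (k : ℤ) :
    coefInner (deriv γ) (deriv h) k =
      ((4 * Real.pi ^ 2 * (k : ℝ) ^ 2 : ℝ) : ℂ) * coefInner γ h k := by
  simp only [coefInner, fCoef_deriv hγp hγ, fCoef_deriv hhp hh, Finset.mul_sum]
  refine Finset.sum_congr rfl fun j _ => ?_
  simp only [star_mul', Complex.star_def, Complex.conj_I, Complex.conj_ofReal, map_ofNat,
    map_intCast]
  push_cast
  linear_combination (-4 * (Real.pi : ℂ) ^ 2 * k ^ 2 * fCoef γ k j *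
    (starRingEnd ℂ) (fCoef h k j)) * Complex.I_sq

lemma exp_sub_one_mul_star (x : ℝ) :
    (Complex.exp (x * Complex.I) - 1) * star (Complex.exp (x * Complex.I) - 1) =
      ((2 - 2 * Real.cos x : ℝ) : ℂ) := by
  rw [Complex.star_def, Complex.mul_conj, Complex.normSq_apply]
  congr 1
  simp only [Complex.sub_re, Complex.exp_ofReal_mul_I_re, Complex.one_re, Complex.sub_im,
    Complex.exp_ofReal_mul_I_im, Complex.one_im]
  linear_combination Real.sin_sq_add_cos_sq x

lemma coefInner_translate_sub {γ h : ℝ → Rn n} (hγp : Function.Periodic γ 1)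
    (hhp : Function.Periodic h 1) (hγ : Continuous γ) (hh : Continuous h) (w : ℝ) (k : ℤ) :
    coefInner (fun u => γ (u + w) - γ u) (fun u => h (u + w) - h u) k =
      ((2 - 2 * Real.cos (2 * Real.pi * k * w) : ℝ) : ℂ) * coefInner γ h k := by
  simp only [coefInner, fCoef_translate_sub hγp hγ, fCoef_translate_sub hhp hh, Finset.mul_sum,
    ← exp_sub_one_mul_star]
  refine Finset.sum_congr rfl fun j _ => ?_
  rw [show (2 * Real.pi * Complex.I * k * w : ℂ) =
    ((2 * Real.pi * k * w : ℝ) : ℂ) * Complex.I by push_cast; ring, star_mul']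
  ring

/-- The symbol of the quadratic form obtained by integrating `Qintegrand` in `u`. -/
def qSymbol (α k w : ℝ) : ℝ :=
  4 * Real.pi ^ 2 * k ^ 2 / |w| ^ α - (2 - 2 * Real.cos (2 * Real.pi * k * w)) / |w| ^ (α + 2)

lemma hasSum_qSymbol (α : ℝ) {γ h : ℝ → Rn n} (hγp : Function.Periodic γ 1)
    (hhp : Function.Periodic h 1) (hγ : ContDiff ℝ 1 γ) (hh : ContDiff ℝ 1 h) (w : ℝ) :
    HasSum (fun k : ℤ => (qSymbol α k w : ℂ) * coefInner γ h k)
      ((∫ u in Ioc (0:ℝ) 1, Qintegrand α γ h u w : ℝ) : ℂ) := by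
  have hγ' : Continuous (deriv γ) := hγ.continuous_deriv le_rfl
  have hh' : Continuous (deriv h) := hh.continuous_deriv le_rfl
  have hγ0 := hγ.continuous
  have hh0 := hh.continuous
  have h1 := (hasSum_coefInner hγp.deriv_one hhp.deriv_one hγ' hh').div_const ((|w| ^ α : ℝ) : ℂ)
  have h2 := (hasSum_coefInner (F := fun u => γ (u + w) - γ u) (G := fun u => h (u + w) - h u)
    (fun u => by simp only [add_right_comm u 1 w, hγp _])
    (fun u => by simp only [add_right_comm u 1 w, hhp _])
    (by fun_prop) (by fun_prop)).div_const ((|w| ^ (α + 2) : ℝ) : ℂ)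
  convert! h1.sub h2 using 1
  · funext k
    rw [coefInner_deriv hγp hhp hγ hh, coefInner_translate_sub hγp hhp hγ0 hh0, qSymbol]
    push_cast
    ring
  · simp only [Qintegrand]
    rw [integral_sub, integral_div, integral_div]
    · push_cast
      rfl
    · exact (Continuous.integrableOn_Icc (by fun_prop)).mono_set Ioc_subset_Icc_self
    · exact (Continuous.integrableOn_Icc (by fun_prop)).mono_set Ioc_subset_Icc_self

lemma sq_sub_two_sub_cos_nonneg (x : ℝ) : 0 ≤ x ^ 2 - (2 - 2 * Real.cos x) := by
  linarith [Real.one_sub_sq_div_two_le_cos (x := x)]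

lemma sq_sub_two_sub_cos_le_sq (x : ℝ) : x ^ 2 - (2 - 2 * Real.cos x) ≤ x ^ 2 := by
  linarith [Real.cos_le_one x]

lemma sq_sub_two_sub_cos_le_pow_four (x : ℝ) : x ^ 2 - (2 - 2 * Real.cos x) ≤ x ^ 4 := by
  have h4 : |x| ^ 4 = x ^ 4 := (by decide : Even 4).pow_abs x
  rcases le_total |x| 1 with hx | hx
  · have h := (abs_le.mp (Real.cos_bound hx)).2
    have : 0 ≤ x ^ 4 := by positivity
    rw [h4] at h
    linarith
  · have : 1 ≤ x ^ 2 := by rwa [one_le_sq_iff_one_le_abs]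
    nlinarith [sq_sub_two_sub_cos_le_sq x]

lemma rpow_add_two_abs {w : ℝ} (hw : w ≠ 0) (α : ℝ) : |w| ^ (α + 2) = |w| ^ α * w ^ 2 := by
  rw [Real.rpow_add (abs_pos.mpr hw), Real.rpow_two, sq_abs]

lemma qSymbol_eq (α k : ℝ) {w : ℝ} (hw : w ≠ 0) : qSymbol α k w =
    ((2 * Real.pi * k * w) ^ 2 - (2 - 2 * Real.cos (2 * Real.pi * k * w))) / |w| ^ (α + 2) := by
  have h0 : |w| ^ α ≠ 0 := (Real.rpow_pos_of_pos (abs_pos.mpr hw) α).ne'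
  rw [qSymbol, rpow_add_two_abs hw]
  field_simp
  ring

lemma qSymbol_zero {α : ℝ} (hα : 0 < α) (k : ℝ) : qSymbol α k 0 = 0 := by
  rw [qSymbol, abs_zero, Real.zero_rpow hα.ne', Real.zero_rpow (by positivity)]
  simp

lemma qSymbol_nonneg {α : ℝ} (hα : 0 < α) (k w : ℝ) : 0 ≤ qSymbol α k w := by
  rcases eq_or_ne w 0 with rfl | hw
  · rw [qSymbol_zero hα]
  · rw [qSymbol_eq α k hw]
    exact div_nonneg (sq_sub_two_sub_cos_nonneg _) (by positivity)

lemma qSymbol_one_pos (α : ℝ) {w : ℝ} (hw : w ≠ 0) : 0 < qSymbol α 1 w := by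
  rw [qSymbol_eq α 1 hw]
  have h := Real.one_sub_sq_div_two_lt_cos (x := 2 * Real.pi * 1 * w) (by positivity)
  exact div_pos (by linarith) (Real.rpow_pos_of_pos (abs_pos.mpr hw) _)

lemma qSymbol_abs (α k w : ℝ) : qSymbol α |k| w = qSymbol α k w := by
  have h : Real.cos (2 * Real.pi * |k| * w) = Real.cos (2 * Real.pi * k * w) := by
    rcases abs_choice k with h | h <;> rw [h]
    rw [← Real.cos_neg]
    ring_nf
  rw [qSymbol, qSymbol, sq_abs, h]

lemma qSymbol_neg (α k w : ℝ) : qSymbol α k (-w) = qSymbol α k w := by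
  have h : Real.cos (2 * Real.pi * k * -w) = Real.cos (2 * Real.pi * k * w) := by
    rw [← Real.cos_neg]
    ring_nf
  rw [qSymbol, qSymbol, abs_neg, h]

lemma qSymbol_scale (α : ℝ) {r : ℝ} (hr : 0 < r) (w : ℝ) :
    qSymbol α r w = r ^ (α + 2) * qSymbol α 1 (r * w) := by
  have h1 : r ^ (α + 2) ≠ 0 := (Real.rpow_pos_of_pos hr _).ne'
  have h2 : r ^ α ≠ 0 := (Real.rpow_pos_of_pos hr _).ne'
  rw [qSymbol, qSymbol, abs_mul, abs_of_pos hr, Real.mul_rpow hr.le (abs_nonneg w),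
    Real.mul_rpow hr.le (abs_nonneg w), show 2 * Real.pi * 1 * (r * w) = 2 * Real.pi * r * w by ring,
    mul_sub, ← div_div, ← div_div, ← mul_div_assoc, ← mul_div_assoc,
    ← mul_div_assoc, mul_div_cancel₀ _ h1]
  congr 2
  rw [Real.rpow_add hr, Real.rpow_two]
  field_simp

lemma measurable_qSymbol (α k : ℝ) : Measurable (qSymbol α k) := by
  unfold qSymbol
  fun_prop

lemma integrable_qSymbol_one {α : ℝ} (hα : α ∈ Ioo (2:ℝ) 3) : Integrable (qSymbol α 1) := by
  have hα0 : 0 < α := by linarith [hα.1]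
  have near : IntegrableOn (qSymbol α 1) (Ioc 0 1) := by
    have hint : IntegrableOn (fun t : ℝ => (2 * Real.pi) ^ 4 * t ^ (2 - α)) (Ioc 0 1) := by
      refine Integrable.const_mul ?_ _
      exact (intervalIntegrable_iff_integrableOn_Ioc_of_le zero_le_one).mp
        (intervalIntegral.intervalIntegrable_rpow' (by linarith [hα.2]))
    refine hint.mono' (measurable_qSymbol α 1).aestronglyMeasurable ?_
    filter_upwards [ae_restrict_mem measurableSet_Ioc] with t ht
    have ht0 : 0 < t := ht.1
    rw [Real.norm_of_nonneg (qSymbol_nonneg hα0 _ _), qSymbol_eq α 1 ht0.ne', abs_of_pos ht0,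
      div_le_iff₀ (by positivity), mul_assoc (_ ^ _), ← Real.rpow_add ht0]
    refine (sq_sub_two_sub_cos_le_pow_four _).trans_eq ?_
    rw [show 2 - α + (α + 2) = ((4:ℕ) : ℝ) by push_cast; ring, Real.rpow_natCast]
    ring
  have far : IntegrableOn (qSymbol α 1) (Ioi 1) := by
    have hint : IntegrableOn (fun t : ℝ => (2 * Real.pi) ^ 2 * t ^ (-α)) (Ioi 1) :=
      (integrableOn_Ioi_rpow_of_lt (by linarith [hα.1]) zero_lt_one).const_mul _
    refine hint.mono' (measurable_qSymbol α 1).aestronglyMeasurable ?_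
    filter_upwards [ae_restrict_mem measurableSet_Ioi] with t ht
    have ht0 : 0 < t := zero_lt_one.trans ht
    rw [Real.norm_of_nonneg (qSymbol_nonneg hα0 _ _), qSymbol_eq α 1 ht0.ne', abs_of_pos ht0,
      div_le_iff₀ (by positivity), mul_assoc (_ ^ _), ← Real.rpow_add ht0]
    refine (sq_sub_two_sub_cos_le_sq _).trans_eq ?_
    rw [show -α + (α + 2) = ((2:ℕ) : ℝ) by push_cast; ring, Real.rpow_natCast]
    ring
  have hpos : IntegrableOn (qSymbol α 1) (Ioi 0) := by
    rw [← Ioc_union_Ioi_eq_Ioi zero_le_one]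
    exact near.union far
  have hneg : IntegrableOn (qSymbol α 1) (Iic 0) := by
    rw [← Measure.map_neg_eq_self (volume : Measure ℝ)]
    have m : MeasurableEmbedding fun x : ℝ => -x := (Homeomorph.neg ℝ).measurableEmbedding
    rw [m.integrableOn_map_iff]
    simp_rw [Function.comp_def, qSymbol_neg, neg_preimage, neg_Iic, neg_zero]
    exact Iff.mpr integrableOn_Ici_iff_integrableOn_Ioi hpos
  rw [← integrableOn_univ, ← Iic_union_Ioi (a := (0:ℝ))]
  exact hneg.union hpos

/-- The normalized Fourier multiplier of `Q`. -/
def qMult (α : ℝ) (k : ℤ) : ℝ :=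
  ∫ t in (-(|(k : ℝ)| / 2))..(|(k : ℝ)| / 2), qSymbol α 1 t

lemma integral_qSymbol_one_pos {α : ℝ} (hα : α ∈ Ioo (2:ℝ) 3) : 0 < ∫ t, qSymbol α 1 t := by
  have hα0 : 0 < α := by linarith [hα.1]
  rw [integral_pos_iff_support_of_nonneg (qSymbol_nonneg hα0 1) (integrable_qSymbol_one hα)]
  have hsub : Ioo (0:ℝ) 1 ⊆ Function.support (qSymbol α 1) :=
    fun t ht => (qSymbol_one_pos α ht.1.ne').ne'
  exact lt_of_lt_of_le (by simp) (measure_mono hsub)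

lemma tendsto_qMult {α : ℝ} (hα : α ∈ Ioo (2:ℝ) 3) :
    Tendsto (qMult α) cofinite (𝓝 (∫ t, qSymbol α 1 t)) := by
  have habs : Tendsto (fun k : ℤ => |(k : ℝ)| / 2) cofinite atTop := by
    refine Tendsto.atTop_div_const two_pos ?_
    exact (tendsto_norm_cocompact_atTop (E := ℝ)).comp Int.tendsto_coe_cofinite
  exact (intervalIntegral_tendsto_integral (integrable_qSymbol_one hα)
    tendsto_neg_atTop_atBot tendsto_id).comp habs

lemma qMult_nonneg {α : ℝ} (hα : 0 < α) (k : ℤ) : 0 ≤ qMult α k :=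
  intervalIntegral.integral_nonneg (by linarith [abs_nonneg (k : ℝ)])
    fun _ _ => qSymbol_nonneg hα _ _

lemma qMult_le {α : ℝ} (hα : α ∈ Ioo (2:ℝ) 3) (k : ℤ) : qMult α k ≤ ∫ t, qSymbol α 1 t := by
  rw [qMult, intervalIntegral.integral_of_le (by linarith [abs_nonneg (k : ℝ)])]
  exact setIntegral_le_integral (integrable_qSymbol_one hα)
    (Eventually.of_forall (qSymbol_nonneg (by linarith [hα.1]) 1))

lemma integrable_qSymbol {α : ℝ} (hα : α ∈ Ioo (2:ℝ) 3) (k : ℝ) : Integrable (qSymbol α k) := by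
  rcases eq_or_ne k 0 with rfl | hk
  · have : qSymbol α 0 = fun _ => 0 := by funext w; simp [qSymbol]
    rw [this]
    exact integrable_zero _ _ _
  · have hr : 0 < |k| := abs_pos.mpr hk
    have : qSymbol α k = fun w => |k| ^ (α + 2) * qSymbol α 1 (|k| * w) := by
      funext w
      rw [← qSymbol_abs, qSymbol_scale α hr]
    rw [this]
    exact ((integrable_qSymbol_one hα).comp_mul_left' hr.ne').const_mul _

lemma integral_qSymbol {α : ℝ} (hα : 0 < α) (k : ℤ) :
    ∫ w in Icc (-(1:ℝ)/2) (1/2), qSymbol α k w = qMult α k * |(k : ℝ)| ^ (α + 1) := by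
  rcases eq_or_ne k 0 with rfl | hk
  · have : ∀ w, qSymbol α 0 w = 0 := by intro w; simp [qSymbol]
    simp [this, Real.zero_rpow (by positivity : α + 1 ≠ 0)]
  · have hr : 0 < |(k : ℝ)| := abs_pos.mpr (Int.cast_ne_zero.mpr hk)
    rw [integral_Icc_eq_integral_Ioc, ← intervalIntegral.integral_of_le (by norm_num)]
    simp_rw [← qSymbol_abs α (k : ℝ), qSymbol_scale α hr]
    rw [intervalIntegral.integral_const_mul,
      intervalIntegral.integral_comp_mul_left (qSymbol α 1) hr.ne', smul_eq_mul, qMult,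
      show α + 2 = (α + 1) + 1 by ring, Real.rpow_add_one hr.ne',
      show |(k : ℝ)| * (-1 / 2) = -(|(k : ℝ)| / 2) by ring,
      show |(k : ℝ)| * (1 / 2) = |(k : ℝ)| / 2 by ring]
    field_simp

/-- The squared norm of the `k`-th Fourier coefficient of a curve. -/
def coefSq (γ : ℝ → Rn n) (k : ℤ) : ℝ := ∑ j, ‖fCoef γ k j‖ ^ 2

lemma coefSq_nonneg (γ : ℝ → Rn n) (k : ℤ) : 0 ≤ coefSq γ k :=
  Finset.sum_nonneg fun _ _ => by positivity

lemma coefInner_self (γ : ℝ → Rn n) (k : ℤ) : coefInner γ γ k = (coefSq γ k : ℂ) := by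
  simp only [coefInner, coefSq, Complex.star_def, Complex.mul_conj']
  push_cast
  rfl

lemma norm_coefInner_le (γ h : ℝ → Rn n) (k : ℤ) :
    ‖coefInner γ h k‖ ≤ coefSq γ k + coefSq h k := by
  rw [coefSq, coefSq, ← Finset.sum_add_distrib]
  refine (norm_sum_le _ _).trans (Finset.sum_le_sum fun j _ => ?_)
  rw [norm_mul, norm_star]
  nlinarith [sq_nonneg (‖fCoef γ k j‖ - ‖fCoef h k j‖), sq_nonneg ‖fCoef γ k j‖,
    sq_nonneg ‖fCoef h k j‖]

lemma hasSum_norm_sq_deriv_translate_sub {γ : ℝ → Rn n} (hp : Function.Periodic γ 1)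
    (hγ : ContDiff ℝ 1 γ) (w : ℝ) :
    HasSum (fun k : ℤ => (2 - 2 * Real.cos (2 * Real.pi * k * w)) *
        (4 * Real.pi ^ 2 * (k : ℝ) ^ 2) * coefSq γ k)
      (∫ u in Ioc (0:ℝ) 1, ‖deriv γ (u + w) - deriv γ u‖ ^ 2) := by
  have hc : Continuous (deriv γ) := hγ.continuous_deriv le_rfl
  have hdiff : Function.Periodic (fun u => deriv γ (u + w) - deriv γ u) 1 := fun u => by
    simp only [add_right_comm u 1 w, hp.deriv_one _]
  have h := hasSum_coefInner hdiff hdiff (by fun_prop) (by fun_prop)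
  rw [← Complex.hasSum_ofReal]
  simp only [real_inner_self_eq_norm_sq] at h
  convert! h using 1
  funext k
  rw [coefInner_translate_sub hp.deriv_one hp.deriv_one hc hc, coefInner_deriv hp hp hγ hγ,
    coefInner_self]
  push_cast
  ring

lemma le_lintegral_gagliardo_mode {α : ℝ} (hα : 0 < α) {k : ℤ} (hk : k ≠ 0) {a : ℝ} (ha : 0 ≤ a) :
    ENNReal.ofReal (2 * Real.pi ^ 2 * (|(k : ℝ)| ^ (α + 1) * a)) ≤
      ∫⁻ w in Ioo (-(1:ℝ)/2) (1/2), ENNReal.ofReal ((2 - 2 * Real.cos (2 * Real.pi * k * w)) *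
        (4 * Real.pi ^ 2 * (k : ℝ) ^ 2) * a / |w| ^ α) := by
  set r : ℝ := |(k : ℝ)| with hrdef
  have hr1 : 1 ≤ r := by
    rw [hrdef, ← Int.cast_abs]
    exact_mod_cast Int.one_le_abs hk
  have hr : 0 < r := zero_lt_one.trans_le hr1
  have hkr : (k : ℝ) ^ 2 = r ^ 2 := (sq_abs _).symm
  have hsub : Ioo (1 / (4 * r)) (1 / (2 * r)) ⊆ Ioo (-(1:ℝ)/2) (1/2) := by
    refine Ioo_subset_Ioo (le_trans (by norm_num) (by positivity : 0 ≤ 1 / (4 * r))) ?_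
    gcongr
    linarith
  calc ENNReal.ofReal (2 * Real.pi ^ 2 * (r ^ (α + 1) * a))
      = ENNReal.ofReal (8 * Real.pi ^ 2 * r ^ 2 * a * r ^ α) *
          volume (Ioo (1 / (4 * r)) (1 / (2 * r))) := by
        rw [Real.volume_Ioo, ← ENNReal.ofReal_mul (by positivity), Real.rpow_add_one hr.ne']
        congr 1
        field_simp
        ring
    _ = ∫⁻ _ in Ioo (1 / (4 * r)) (1 / (2 * r)),
          ENNReal.ofReal (8 * Real.pi ^ 2 * r ^ 2 * a * r ^ α) := by rw [setLIntegral_const]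
    _ ≤ ∫⁻ w in Ioo (1 / (4 * r)) (1 / (2 * r)),
          ENNReal.ofReal ((2 - 2 * Real.cos (2 * Real.pi * k * w)) *
            (4 * Real.pi ^ 2 * (k : ℝ) ^ 2) * a / |w| ^ α) := by
        refine setLIntegral_mono' measurableSet_Ioo fun w hw => ENNReal.ofReal_le_ofReal ?_
        have hw0 : 0 < w := lt_trans (by positivity) hw.1
        have hlow : 1 < 4 * r * w := by
          have := hw.1
          rwa [div_lt_iff₀ (by positivity), mul_comm] at this
        have hup : 2 * r * w < 1 := by
          have := hw.2
          rwa [lt_div_iff₀ (by positivity), mul_comm] at this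
        have hcos : Real.cos (2 * Real.pi * k * w) ≤ 0 := by
          rw [← Real.cos_abs, abs_mul, abs_mul, abs_of_pos Real.two_pi_pos, abs_of_pos hw0]
          refine Real.cos_nonpos_of_pi_div_two_le_of_le ?_ ?_ <;> nlinarith [Real.pi_pos]
        have hpow : r ^ α * |w| ^ α ≤ 1 := by
          rw [abs_of_pos hw0, ← Real.mul_rpow hr.le hw0.le]
          exact Real.rpow_le_one (by positivity) (by nlinarith) hα.le
        rw [le_div_iff₀ (Real.rpow_pos_of_pos (abs_pos.mpr hw0.ne') _), hkr, mul_assoc]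
        calc 8 * Real.pi ^ 2 * r ^ 2 * a * (r ^ α * |w| ^ α)
            ≤ 8 * Real.pi ^ 2 * r ^ 2 * a * 1 := by gcongr
          _ = 2 * (4 * Real.pi ^ 2 * r ^ 2) * a := by ring
          _ ≤ (2 - 2 * Real.cos (2 * Real.pi * k * w)) * (4 * Real.pi ^ 2 * r ^ 2) * a := by
              gcongr
              linarith
    _ ≤ _ := lintegral_mono_set hsub

/-- A curve in `H^{(α+1)/2,2}` has Fourier coefficients that are square summable against
`|k|^{α+1}`. -/
lemma summable_rpow_mul_coefSq {α : ℝ} (hα : 0 < α) {γ : ℝ → Rn n} (hp : Function.Periodic γ 1)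
    (hγ : ContDiff ℝ 1 γ) (hfin : gagliardoSq ((α - 1) / 2) (deriv γ) < ⊤) :
    Summable (fun k : ℤ => |(k : ℝ)| ^ (α + 1) * coefSq γ k) := by
  have hc : Continuous (deriv γ) := hγ.continuous_deriv le_rfl
  set m : ℤ → ℝ → ℝ := fun k w => (2 - 2 * Real.cos (2 * Real.pi * k * w)) *
    (4 * Real.pi ^ 2 * (k : ℝ) ^ 2) * coefSq γ k / |w| ^ α with hm
  have hm0 : ∀ k w, 0 ≤ m k w := fun k w => by
    have h1 : 0 ≤ 2 - 2 * Real.cos (2 * Real.pi * k * w) := by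
      linarith [Real.cos_le_one (2 * Real.pi * k * w)]
    have h2 := coefSq_nonneg γ k
    positivity
  have hinner : ∀ w, ∫⁻ u in Ioc (0:ℝ) 1,
      ENNReal.ofReal (‖deriv γ (u + w) - deriv γ u‖ ^ 2 / |w| ^ α) =
        ∑' k : ℤ, ENNReal.ofReal (m k w) := fun w => by
    have hs := (hasSum_norm_sq_deriv_translate_sub hp hγ w).div_const (|w| ^ α)
    rw [← ENNReal.ofReal_tsum_of_nonneg (fun k => hm0 k w) hs.summable, hs.tsum_eq, ← integral_div,
      ofReal_integral_eq_lintegral_ofReal]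
    · exact (Continuous.integrableOn_Icc (by fun_prop)).mono_set Ioc_subset_Icc_self
    · exact Eventually.of_forall fun u => by positivity
  have hswap : gagliardoSq ((α - 1) / 2) (deriv γ) =
      ∑' k : ℤ, ∫⁻ w in Ioo (-(1:ℝ)/2) (1/2), ENNReal.ofReal (m k w) := by
    rw [gagliardoSq, show 1 + 2 * ((α - 1) / 2) = α by ring, lintegral_lintegral_swap]
    · simp_rw [hinner]
      refine lintegral_tsum fun k => Measurable.aemeasurable ?_
      simp only [hm]
      fun_prop
    · refine Measurable.aemeasurable ?_
      have h1 : Measurable fun p : ℝ × ℝ => ‖deriv γ (p.1 + p.2) - deriv γ p.1‖ ^ 2 :=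
        Continuous.measurable (by fun_prop)
      have h2 : Measurable fun p : ℝ × ℝ => |p.2| ^ α := by fun_prop
      exact (h1.div h2).ennreal_ofReal
  have hle : ∑' k : ℤ, ENNReal.ofReal (2 * Real.pi ^ 2 * (|(k : ℝ)| ^ (α + 1) * coefSq γ k)) ≤
      gagliardoSq ((α - 1) / 2) (deriv γ) := by
    rw [hswap]
    refine ENNReal.tsum_le_tsum fun k => ?_
    rcases eq_or_ne k 0 with rfl | hk
    · simp [Real.zero_rpow (by positivity : α + 1 ≠ 0)]
    · exact le_lintegral_gagliardo_mode hα hk (coefSq_nonneg γ k)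
  have hsum := ENNReal.summable_toReal (hle.trans_lt hfin).ne
  have hnonneg : ∀ k : ℤ, 0 ≤ 2 * Real.pi ^ 2 * (|(k : ℝ)| ^ (α + 1) * coefSq γ k) := fun k => by
    have := coefSq_nonneg γ k
    positivity
  simp only [ENNReal.toReal_ofReal (hnonneg _)] at hsum
  exact (summable_mul_left_iff (by positivity)).mp hsum

lemma integrable_of_hasSum_of_summable_integral_norm {X ι E : Type*} [MeasurableSpace X]
    {μ : Measure X} [Countable ι] [NormedAddCommGroup E] {F : ι → X → E} {f : X → E}
    (hF : ∀ i, Integrable (F i) μ) (hsum : Summable fun i => ∫ x, ‖F i x‖ ∂μ)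
    (hf : AEStronglyMeasurable f μ) (hs : ∀ x, HasSum (fun i => F i x) (f x)) :
    Integrable f μ := by
  refine ⟨hf, ?_⟩
  calc ∫⁻ x, ‖f x‖ₑ ∂μ ≤ ∫⁻ x, ∑' i, ‖F i x‖ₑ ∂μ :=
        lintegral_mono fun x => (hs x).tsum_eq ▸ enorm_tsum_le_tsum_enorm
    _ = ∑' i, ∫⁻ x, ‖F i x‖ₑ ∂μ := lintegral_tsum fun i => (hF i).1.enorm
    _ = ∑' i, ENNReal.ofReal (∫ x, ‖F i x‖ ∂μ) := by
        simp only [ofReal_integral_norm_eq_lintegral_enorm (hF _)]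
    _ = ENNReal.ofReal (∑' i, ∫ x, ‖F i x‖ ∂μ) :=
        (ENNReal.ofReal_tsum_of_nonneg (fun i => integral_nonneg fun x => norm_nonneg _) hsum).symm
    _ < ⊤ := ENNReal.ofReal_lt_top

lemma measurableSet_Wset (ε : ℝ) : MeasurableSet (Wset ε) :=
  measurableSet_Icc.union measurableSet_Icc

lemma Wset_subset {ε : ℝ} (hε : 0 < ε) : Wset ε ⊆ Icc (-(1:ℝ)/2) (1/2) := by
  rintro w (hw | hw)
  · exact ⟨hw.1, by linarith [hw.2]⟩
  · exact ⟨by linarith [hw.1], hw.2⟩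

lemma ne_zero_of_mem_Wset {ε w : ℝ} (hε : 0 < ε) (hw : w ∈ Wset ε) : w ≠ 0 := by
  rcases hw with hw | hw
  · exact (lt_of_le_of_lt hw.2 (neg_neg_of_pos hε)).ne
  · exact (hε.trans_le hw.1).ne'

/-- The sets `Wset ε` exhaust the interval `[-1/2, 1/2]` as `ε ↘ 0`. -/
lemma tendsto_setIntegral_Wset {f : ℝ → ℝ} (hf : IntegrableOn f (Icc (-(1:ℝ)/2) (1/2))) :
    Tendsto (fun ε : ℝ => ∫ w in Wset ε, f w) (𝓝[>] (0:ℝ))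
      (𝓝 (∫ w in Icc (-(1:ℝ)/2) (1/2), f w)) := by
  have hcover : AECover (volume.restrict (Icc (-(1:ℝ)/2) (1/2))) (𝓝[>] (0:ℝ)) Wset := by
    refine ⟨?_, measurableSet_Wset⟩
    have hne : ∀ᵐ w ∂(volume.restrict (Icc (-(1:ℝ)/2) (1/2))), w ≠ 0 :=
      ae_restrict_of_ae (Measure.ae_ne volume 0)
    filter_upwards [hne, ae_restrict_mem measurableSet_Icc] with w hw0 hw
    filter_upwards [Ioo_mem_nhdsGT (abs_pos.mpr hw0)] with ε hε
    rcases lt_or_gt_of_ne hw0 with h | h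
    · refine Or.inl ⟨hw.1, ?_⟩
      have := hε.2
      rw [abs_of_neg h] at this
      linarith
    · refine Or.inr ⟨?_, hw.2⟩
      have := hε.2
      rw [abs_of_pos h] at this
      exact this.le
  refine (hcover.integral_tendsto_of_countably_generated hf).congr' ?_
  filter_upwards [self_mem_nhdsWithin] with ε hε
  rw [Measure.restrict_restrict (measurableSet_Wset ε), inter_eq_left.mpr (Wset_subset hε)]

lemma integral_Qintegrand_swap (α : ℝ) {γ h : ℝ → Rn n} (hγ : ContDiff ℝ 1 γ) (hh : ContDiff ℝ 1 h)
    {ε : ℝ} (hε : 0 < ε) :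
    ∫ u in Ioc (0:ℝ) 1, ∫ w in Wset ε, Qintegrand α γ h u w =
      ∫ w in Wset ε, ∫ u in Ioc (0:ℝ) 1, Qintegrand α γ h u w := by
  have hγ' : Continuous (deriv γ) := hγ.continuous_deriv le_rfl
  have hh' : Continuous (deriv h) := hh.continuous_deriv le_rfl
  have hγ0 := hγ.continuous
  have hh0 := hh.continuous
  refine integral_integral_swap ?_
  rw [Measure.prod_restrict]
  have hcompact : IsCompact (Icc (0:ℝ) 1 ×ˢ Wset ε) :=
    isCompact_Icc.prod (isCompact_Icc.union isCompact_Icc)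
  have hcont : ContinuousOn (Function.uncurry (Qintegrand α γ h)) (Icc (0:ℝ) 1 ×ˢ Wset ε) := by
    have hne : ∀ p ∈ Icc (0:ℝ) 1 ×ˢ Wset ε, |p.2| ≠ 0 := fun p hp =>
      abs_ne_zero.mpr (ne_zero_of_mem_Wset hε hp.2)
    have hpow : ∀ β : ℝ, ContinuousOn (fun p : ℝ × ℝ => |p.2| ^ β) (Icc (0:ℝ) 1 ×ˢ Wset ε) :=
      fun β => ContinuousOn.rpow_const (by fun_prop) fun p hp => Or.inl (hne p hp)
    have hpow0 : ∀ β : ℝ, ∀ p ∈ Icc (0:ℝ) 1 ×ˢ Wset ε, |p.2| ^ β ≠ 0 := fun β p hp =>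
      (Real.rpow_pos_of_pos ((abs_nonneg _).lt_of_ne' (hne p hp)) β).ne'
    exact (ContinuousOn.div (by fun_prop) (hpow _) (hpow0 _)).sub
      (ContinuousOn.div (by fun_prop) (hpow _) (hpow0 _))
  exact (hcont.integrableOn_compact hcompact).mono_set (prod_mono_left Ioc_subset_Icc_self)

lemma stronglyMeasurable_integral_Qintegrand (α : ℝ) {γ h : ℝ → Rn n} (hγ : ContDiff ℝ 1 γ)
    (hh : ContDiff ℝ 1 h) :
    StronglyMeasurable fun w => ∫ u in Ioc (0:ℝ) 1, Qintegrand α γ h u w := by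
  have hγ' : Continuous (deriv γ) := hγ.continuous_deriv le_rfl
  have hh' : Continuous (deriv h) := hh.continuous_deriv le_rfl
  have hγ0 := hγ.continuous
  have hh0 := hh.continuous
  have h1 : Measurable fun p : ℝ × ℝ => ⟪deriv γ p.1, deriv h p.1⟫ :=
    Continuous.measurable (by fun_prop)
  have h2 : Measurable fun p : ℝ × ℝ => ⟪γ (p.1 + p.2) - γ p.1, h (p.1 + p.2) - h p.1⟫ :=
    Continuous.measurable (by fun_prop)
  have h3 : ∀ β : ℝ, Measurable fun p : ℝ × ℝ => |p.2| ^ β := fun β => by fun_prop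
  have hm : Measurable (Function.uncurry (Qintegrand α γ h)) :=
    (h1.div (h3 _)).sub (h2.div (h3 _))
  exact hm.stronglyMeasurable.integral_prod_left

lemma summable_norm_qMult {α : ℝ} (hα : α ∈ Ioo (2:ℝ) 3) {γ h : ℝ → Rn n}
    (hγ : MemH1 ((α - 1) / 2) γ) (hh : MemH1 ((α - 1) / 2) h) :
    Summable fun k : ℤ => qMult α k * |(k : ℝ)| ^ (α + 1) * ‖coefInner γ h k‖ := by
  have hα0 : 0 < α := by linarith [hα.1]
  have hs := ((summable_rpow_mul_coefSq hα0 hγ.1 hγ.2.1 hγ.2.2).add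
    (summable_rpow_mul_coefSq hα0 hh.1 hh.2.1 hh.2.2)).mul_left (∫ t, qSymbol α 1 t)
  have hq := qMult_nonneg hα0
  refine hs.of_nonneg_of_le (fun k => by have := hq k; positivity) fun k => ?_
  rw [← mul_add, ← mul_assoc]
  have := hq k
  have := qMult_le hα k
  have := norm_coefInner_le γ h k
  have := (integral_qSymbol_one_pos hα).le
  gcongr

/-- There is a sequence `(q_k)` of reals converging to a positive constant as
`|k| → ∞` such that for all `γ, h ∈ H^{(α+1)/2,2}` the principal value `Q(γ,h)` exists, the
series `Σ q_k |k|^{α+1} ⟪γ̂(k), ĥ(k)⟫_{ℂⁿ}` converges absolutely, and `Q(γ,h)` equals its sum. -/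
theorem statement11 {n : ℕ} (hn : 2 ≤ n) {α : ℝ} (hα : α ∈ Ioo (2:ℝ) 3) :
    ∃ q : ℤ → ℝ, ∃ c : ℝ, 0 < c ∧
      Tendsto q Filter.cofinite (𝓝 c) ∧
      ∀ γ h : ℝ → Rn n, MemH1 ((α - 1) / 2) γ → MemH1 ((α - 1) / 2) h →
        ∃ Qv : ℝ,
          Tendsto (fun ε : ℝ => ∫ u in Ioc (0:ℝ) 1, ∫ w in Wset ε, Qintegrand α γ h u w)
            (𝓝[>] (0:ℝ)) (𝓝 Qv) ∧
          Summable (fun k : ℤ =>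
            ‖((q k * |(k : ℝ)| ^ (α + 1) : ℝ) : ℂ) *
              ∑ j, fCoef γ k j * star (fCoef h k j)‖) ∧
          HasSum (fun k : ℤ =>
            ((q k * |(k : ℝ)| ^ (α + 1) : ℝ) : ℂ) *
              ∑ j, fCoef γ k j * star (fCoef h k j)) (Qv : ℂ) := by
  have hα0 : 0 < α := by linarith [hα.1]
  refine ⟨qMult α, ∫ t, qSymbol α 1 t, integral_qSymbol_one_pos hα, tendsto_qMult hα,
    fun γ h hγ hh => ?_⟩
  have hsum := summable_norm_qMult hα hγ hh
  have hnorm : ∀ k : ℤ, ‖((qMult α k * |(k : ℝ)| ^ (α + 1) : ℝ) : ℂ) * coefInner γ h k‖ =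
      qMult α k * |(k : ℝ)| ^ (α + 1) * ‖coefInner γ h k‖ := fun k => by
    have := qMult_nonneg hα0 k
    rw [norm_mul, Complex.norm_real, Real.norm_of_nonneg (by positivity)]
  set J : ℝ → ℝ := fun w => ∫ u in Ioc (0:ℝ) 1, Qintegrand α γ h u w
  have hJsum : ∀ w, HasSum (fun k : ℤ => (qSymbol α k w : ℂ) * coefInner γ h k) (J w : ℂ) :=
    hasSum_qSymbol α hγ.1 hh.1 hγ.2.1 hh.2.1
  have hFint : ∀ k : ℤ, IntegrableOn (fun w => (qSymbol α k w : ℂ) * coefInner γ h k)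
      (Icc (-(1:ℝ)/2) (1/2)) := fun k =>
    ((integrable_qSymbol hα k).integrableOn.ofReal (𝕜 := ℂ)).mul_const _
  have hFsum : Summable fun k : ℤ =>
      ∫ w in Icc (-(1:ℝ)/2) (1/2), ‖(qSymbol α k w : ℂ) * coefInner γ h k‖ := by
    refine hsum.congr fun k => ?_
    simp only [norm_mul, Complex.norm_real, Real.norm_of_nonneg (qSymbol_nonneg hα0 _ _)]
    rw [integral_mul_const, integral_qSymbol hα0]
  have hJint : IntegrableOn J (Icc (-(1:ℝ)/2) (1/2)) := by
    have hJm := stronglyMeasurable_integral_Qintegrand α hγ.2.1 hh.2.1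
    have := integrable_of_hasSum_of_summable_integral_norm hFint hFsum
      (f := fun w => (J w : ℂ)) (Complex.continuous_ofReal.comp_stronglyMeasurable
        hJm).aestronglyMeasurable hJsum
    exact this.re
  refine ⟨∫ w in Icc (-(1:ℝ)/2) (1/2), J w, ?_, hsum.congr fun k => (hnorm k).symm, ?_⟩
  · refine (tendsto_setIntegral_Wset hJint).congr' ?_
    filter_upwards [self_mem_nhdsWithin] with ε hε
    exact (integral_Qintegrand_swap α hγ.2.1 hh.2.1 hε).symm
  · have key := hasSum_integral_of_summable_integral_norm hFint hFsum
    simp only [(hJsum _).tsum_eq] at key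
    convert! key using 1
    · funext k
      rw [integral_mul_const, integral_complex_ofReal, integral_qSymbol hα0]
      rfl
    · exact integral_complex_ofReal.symm

end
end
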